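/- arXiv:2404.17678 — 3 statements merged into one kernel-verified Lean document; each statement's English description precedes it below -/
import Mathlib

section
/- Let n and m be positive integers and let q be a prime power with q ≡ 1 (mod n). Let ζ_n be a primitive n-th root of unity in F_q^* (an element of multiplicative order n) and let χ_n be a multiplicative character of F_q^* of order n. Then for all multiplicative characters A_1,…,A_m, B_1,…,B_m of F_q^* and all λ ∈ F_q, Σ_{l=0}^{n−1} _mF_m(A_1^n,…,A_m^n; B_1^n,…,B_m^n | ζ_n^l · λ)_q = _{nm}F_{nm}( (A_i χ_n^l : 1 ≤ i ≤ m, 0 ≤ l ≤ n−1) ; (B_i χ_n^l : 1 ≤ i ≤ m, 0 ≤ l ≤ n−1) | λ^n )_q, where the right-hand side is the hypergeometric function of order nm whose upper parameters are the nm characters A_i χ_n^l and whose lower parameters are the nm characters B_i χ_n^l. -/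
/-- The finite field hypergeometric function `ₘFₘ` of McCarthy, with upper parameters `A`,
lower parameters `B` (indexed by a finite type `ι`), and argument `lam`. -/
noncomputable def ffHyp {F : Type} [Field F] [Fintype F] (θ : AddChar F ℂ)
    {ι : Type} [Fintype ι] (A B : ι → MulChar F ℂ) (lam : F) : ℂ :=
  letI : Fintype (MulChar F ℂ) := Fintype.ofFinite _
  (-1 : ℂ) / ((Fintype.card F : ℂ) - 1) *
    ∑ χ : MulChar F ℂ,
      (∏ i, (gaussSum (A i * χ) θ / gaussSum (A i) θ) *
        (gaussSum ((B i * χ)⁻¹) θ / gaussSum ((B i)⁻¹) θ)) *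
      χ (-1) ^ (Fintype.card ι) * χ lam

set_option linter.unusedSectionVars false
namespace HD
open Polynomial Finset
open scoped Classical
section newton
variable {F : Type} [Field F] [Fintype F]

lemma finite_monic (F : Type) [Field F] [Fintype F] (k : ℕ) :
    {g : F[X] | g.Monic ∧ g.natDegree = k}.Finite := by
  have e := (monicEquivDegreeLT (R := F) k).trans (degreeLTEquiv F k).toEquiv
  have : Finite {g : F[X] // g.Monic ∧ g.natDegree = k} := Finite.of_equiv _ e.symm
  exact Set.finite_coe_iff.1 this

/-- monic polynomials of degree `k` -/
noncomputable def MP (F : Type) [Field F] [Fintype F] (k : ℕ) : Finset F[X] :=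
  (finite_monic F k).toFinset

lemma mem_MP {k : ℕ} {g : F[X]} : g ∈ MP F k ↔ g.Monic ∧ g.natDegree = k := by
  simp [MP]

/-- monic irreducible polynomials of degree `d` -/
noncomputable def IR (F : Type) [Field F] [Fintype F] (d : ℕ) : Finset F[X] :=
  (MP F d).filter Irreducible

lemma mem_IR {k : ℕ} {g : F[X]} : g ∈ IR F k ↔ g.Monic ∧ g.natDegree = k ∧ Irreducible g := by
  simp [IR, mem_MP, and_assoc]

/-- coefficient of the L-series -/
noncomputable def es (φ : F[X] → ℂ) (k : ℕ) : ℂ := ∑ g ∈ MP F k, φ g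

/-- coefficient of the logarithmic derivative of the L-series -/
noncomputable def psum (φ : F[X] → ℂ) (i : ℕ) : ℂ :=
  ∑ d ∈ i.divisors, ∑ P ∈ IR F d, (d : ℂ) * φ P ^ (i / d)

lemma deg_formula {k : ℕ} {g : F[X]} (hg : g ∈ MP F k) :
    ∑ d ∈ Icc 1 k, ∑ P ∈ IR F d, ∑ j ∈ Icc 1 k, (if P ^ j ∣ g then d else 0) = k := by
  obtain ⟨hm, hd⟩ := mem_MP.1 hg
  have hg0 : g ≠ 0 := hm.ne_zero
  have h1 : k = ∑ P ∈ (UniqueFactorizationMonoid.normalizedFactors g).toFinset,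
      (UniqueFactorizationMonoid.normalizedFactors g).count P * P.natDegree := by
    have h := leadingCoeff_mul_prod_normalizedFactors g
    rw [hm.leadingCoeff, C_1, one_mul] at h
    have h2 := natDegree_multiset_prod_of_monic (UniqueFactorizationMonoid.normalizedFactors g)
      (fun f hf => ((Polynomial.mem_normalizedFactors_iff hg0).1 hf).2.1)
    rw [h, hd, sum_multiset_map_count] at h2
    simpa using h2
  have h3 : ∀ d, ∀ P ∈ IR F d, ∑ j ∈ Icc 1 k, (if P ^ j ∣ g then d else 0)
      = (UniqueFactorizationMonoid.normalizedFactors g).count P * P.natDegree := by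
    intro d P hP
    obtain ⟨hPm, hPd, hPi⟩ := mem_IR.1 hP
    have key : ∀ j, P ^ j ∣ g ↔ j ≤ (UniqueFactorizationMonoid.normalizedFactors g).count P := by
      intro j
      rw [pow_dvd_iff_le_emultiplicity,
        UniqueFactorizationMonoid.emultiplicity_eq_count_normalizedFactors hPi hg0,
        hPm.normalize_eq_self]
      exact Nat.cast_le
    have hle : (UniqueFactorizationMonoid.normalizedFactors g).count P ≤ k := by
      have h4 := natDegree_le_of_dvd ((key _).2 le_rfl) hg0
      rw [natDegree_pow, hd] at h4
      have := hPi.natDegree_pos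
      nlinarith
    rw [← sum_filter, sum_const, smul_eq_mul, hPd]
    congr 1
    have : (Icc 1 k).filter (fun j => P ^ j ∣ g)
        = Icc 1 ((UniqueFactorizationMonoid.normalizedFactors g).count P) := by
      ext j
      simp only [mem_filter, mem_Icc, key]
      omega
    rw [this]; simp
  rw [sum_congr rfl (fun d _ => sum_congr rfl (h3 d))]
  rw [← sum_biUnion]
  · conv_rhs => rw [h1]
    symm
    apply sum_subset
    · intro P hP
      rw [Multiset.mem_toFinset, Polynomial.mem_normalizedFactors_iff hg0] at hP
      obtain ⟨a, b, c⟩ := hP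
      rw [mem_biUnion]
      refine ⟨P.natDegree, mem_Icc.2 ⟨a.natDegree_pos, hd ▸ natDegree_le_of_dvd c hg0⟩,
        mem_IR.2 ⟨b, rfl, a⟩⟩
    · intro P _ hP
      rw [Multiset.mem_toFinset] at hP
      rw [Multiset.count_eq_zero_of_notMem hP, zero_mul]
  · intro a _ b _ hab
    rw [Function.onFun, Finset.disjoint_left]
    intro P h1 h2
    exact hab ((mem_IR.1 h1).2.1.symm.trans (mem_IR.1 h2).2.1)

/-- multiplicativity on monic polynomials -/
structure MulOn (φ : F[X] → ℂ) : Prop where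
  one : φ 1 = 1
  mul : ∀ g h : F[X], g.Monic → h.Monic → φ (g * h) = φ g * φ h

lemma MulOn.pow {φ : F[X] → ℂ} (hφ : MulOn φ) {P : F[X]} (hP : P.Monic) (j : ℕ) :
    φ (P ^ j) = φ P ^ j := by
  induction j with
  | zero => simp [hφ.one]
  | succ j ih => rw [pow_succ, hφ.mul _ _ (hP.pow j) hP, ih, pow_succ]

lemma sum_dvd {φ : F[X] → ℂ} (hφ : MulOn φ) {P : F[X]} (hP : P.Monic) (j k : ℕ) :
    ∑ g ∈ MP F k, (if P ^ j ∣ g then φ g else 0)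
      = if P.natDegree * j ≤ k then φ P ^ j * es φ (k - P.natDegree * j) else 0 := by
  have hPj : (P ^ j).Monic := hP.pow j
  have hdeg : (P ^ j).natDegree = P.natDegree * j := by rw [natDegree_pow, mul_comm]
  split_ifs with h
  · rw [← sum_filter, es, mul_sum]
    symm
    apply sum_bij (fun h _ => P ^ j * h)
    · intro a ha
      obtain ⟨h1, h2⟩ := mem_MP.1 ha
      rw [mem_filter, mem_MP]
      refine ⟨⟨hPj.mul h1, ?_⟩, dvd_mul_right _ _⟩
      rw [hPj.natDegree_mul h1, h2, hdeg]; omega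
    · intro a _ b _ hab
      exact mul_left_cancel₀ hPj.ne_zero hab
    · intro b hb
      rw [mem_filter, mem_MP] at hb
      obtain ⟨⟨h1, h2⟩, c, rfl⟩ := hb
      have hc : c.Monic := hPj.of_mul_monic_left h1
      refine ⟨c, mem_MP.2 ⟨hc, ?_⟩, rfl⟩
      rw [hPj.natDegree_mul hc, hdeg] at h2
      omega
    · intro a ha
      rw [hφ.mul _ _ hPj (mem_MP.1 ha).1, hφ.pow hP]
  · apply sum_eq_zero
    intro g hg
    obtain ⟨h1, h2⟩ := mem_MP.1 hg
    rw [if_neg]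
    intro hd
    have := natDegree_le_of_dvd hd h1.ne_zero
    omega

lemma newton {φ : F[X] → ℂ} (hφ : MulOn φ) (k : ℕ) :
    (k : ℂ) * es φ k = ∑ i ∈ Icc 1 k, psum φ i * es φ (k - i) := by
  have h1 : (k : ℂ) * es φ k = ∑ d ∈ Icc 1 k, ∑ P ∈ IR F d, ∑ j ∈ Icc 1 k,
      (d : ℂ) * ∑ g ∈ MP F k, (if P ^ j ∣ g then φ g else 0) := by
    rw [es, mul_sum]
    have : ∀ g ∈ MP F k, (k : ℂ) * φ g = ∑ d ∈ Icc 1 k, ∑ P ∈ IR F d, ∑ j ∈ Icc 1 k,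
        (d : ℂ) * (if P ^ j ∣ g then φ g else 0) := by
      intro g hg
      conv_lhs => rw [← deg_formula hg]
      push_cast
      simp only [sum_mul]
      refine sum_congr rfl fun d _ => sum_congr rfl fun P _ => sum_congr rfl fun j _ => ?_
      split_ifs <;> simp
    rw [sum_congr rfl this, sum_comm]
    refine sum_congr rfl fun d _ => ?_
    rw [sum_comm]
    refine sum_congr rfl fun P _ => ?_
    rw [sum_comm]
    refine sum_congr rfl fun j _ => ?_
    rw [mul_sum]
  rw [h1]
  have h2 : ∀ d ∈ Icc 1 k, ∑ P ∈ IR F d, ∑ j ∈ Icc 1 k,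
      (d : ℂ) * ∑ g ∈ MP F k, (if P ^ j ∣ g then φ g else 0)
      = ∑ j ∈ (Icc 1 k).filter (fun j => d * j ≤ k),
        (∑ P ∈ IR F d, (d : ℂ) * φ P ^ j) * es φ (k - d * j) := by
    intro d _
    rw [sum_comm, sum_filter]
    refine sum_congr rfl fun j _ => ?_
    have : ∀ P ∈ IR F d, (d : ℂ) * ∑ g ∈ MP F k, (if P ^ j ∣ g then φ g else 0)
        = if d * j ≤ k then (d : ℂ) * φ P ^ j * es φ (k - d * j) else 0 := by
      intro P hP
      obtain ⟨a, b, c⟩ := mem_IR.1 hP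
      rw [sum_dvd hφ a, b]
      split_ifs <;> ring
    rw [sum_congr rfl this]
    split_ifs
    · rw [sum_mul]
    · simp
  rw [sum_congr rfl h2]
  have h3 : ∀ i ∈ Icc 1 k, psum φ i * es φ (k - i) = ∑ d ∈ i.divisors,
      (∑ P ∈ IR F d, (d : ℂ) * φ P ^ (i / d)) * es φ (k - i) := by
    intro i _
    rw [psum, sum_mul]
  rw [sum_congr rfl h3, sum_sigma', sum_sigma']
  refine sum_bij' (fun x _ => ⟨x.1 * x.2, x.1⟩) (fun x _ => ⟨x.2, x.1 / x.2⟩) ?_ ?_ ?_ ?_ ?_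
  · rintro ⟨d, j⟩ h
    simp only [mem_sigma, mem_Icc, mem_filter, Nat.mem_divisors] at h ⊢
    refine ⟨⟨Nat.mul_pos h.1.1 h.2.1.1, h.2.2⟩, dvd_mul_right _ _, ?_⟩
    exact (Nat.mul_pos h.1.1 h.2.1.1).ne'
  · rintro ⟨i, d⟩ h
    simp only [mem_sigma, mem_Icc, mem_filter, Nat.mem_divisors] at h ⊢
    obtain ⟨⟨h1, h2⟩, ⟨c, rfl⟩, h4⟩ := h
    have hd : 0 < d := Nat.pos_of_ne_zero (by rintro rfl; simp at h4)
    have hc : 0 < c := Nat.pos_of_ne_zero (by rintro rfl; simp at h4)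
    rw [Nat.mul_div_cancel_left _ hd]
    refine ⟨⟨hd, by nlinarith⟩, ⟨hc, by nlinarith⟩, h2⟩
  · rintro ⟨d, j⟩ h
    simp only [mem_sigma, mem_Icc, mem_filter] at h
    simp [Nat.mul_div_cancel_left _ (show 0 < d by omega)]
  · rintro ⟨i, d⟩ h
    simp only [mem_sigma, Nat.mem_divisors] at h
    simp [Nat.mul_div_cancel' h.2.1]
  · rintro ⟨d, j⟩ h
    simp only [mem_sigma, mem_Icc, mem_filter] at h
    simp [Nat.mul_div_cancel_left _ (show 0 < d by omega)]

/-- uniqueness: L-series with additive logarithmic derivatives multiply -/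
lemma es_prod {φ : F[X] → ℂ} (hφ : MulOn φ) {n : ℕ} {ψ : ℕ → F[X] → ℂ} (hψ : ∀ l, MulOn (ψ l))
    (hp : ∀ i, 0 < i → psum φ i = ∑ l ∈ range n, psum (ψ l) i) :
    PowerSeries.mk (es φ) = ∏ l ∈ range n, PowerSeries.mk (es (ψ l)) := by
  have hMP0 : MP F 0 = {1} := by
    ext g
    rw [mem_MP, mem_singleton]
    constructor
    · rintro ⟨h1, h2⟩; exact Polynomial.eq_one_of_monic_natDegree_zero h1 h2
    · rintro rfl; simp
  have hes0 : ∀ {φ : F[X] → ℂ}, MulOn φ → es φ 0 = 1 := by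
    intro φ hφ; simp [es, hMP0, hφ.one]
  have hcoeff : ∀ (f : PowerSeries ℂ) (k : ℕ), PowerSeries.coeff k
      (PowerSeries.X * PowerSeries.derivative ℂ f) = k * PowerSeries.coeff k f := by
    intro f k
    cases k with
    | zero => simp
    | succ k => simp [PowerSeries.coeff_succ_X_mul, PowerSeries.coeff_derivative, mul_comm]
  set Q : (F[X] → ℂ) → PowerSeries ℂ := fun φ => PowerSeries.mk (fun i => if i = 0 then 0 else psum φ i) with hQ
  have hQE : ∀ (φ : F[X] → ℂ) (f : PowerSeries ℂ) (k : ℕ), PowerSeries.coeff k (Q φ * f)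
      = ∑ i ∈ Icc 1 k, psum φ i * PowerSeries.coeff (k - i) f := by
    intro φ f k
    rw [PowerSeries.coeff_mul, Nat.sum_antidiagonal_eq_sum_range_succ_mk]
    simp only [hQ, PowerSeries.coeff_mk]
    rw [sum_range_succ', range_eq_Ico, sum_Ico_add' (fun x => (if x = 0 then 0 else psum φ x) * PowerSeries.coeff (k - x) f) 0 k 1]
    simp only [if_true, zero_mul, add_zero]
    apply sum_congr
    · ext; simp
    · intro x hx
      rw [if_neg]; simp at hx; omega
  have hlog : ∀ {φ : F[X] → ℂ}, MulOn φ → PowerSeries.X * PowerSeries.derivative ℂ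
      (PowerSeries.mk (es φ)) = Q φ * PowerSeries.mk (es φ) := by
    intro φ hφ
    ext k
    rw [hcoeff, hQE]
    simpa using newton hφ k
  have hprod : ∀ s : Finset ℕ, PowerSeries.X * PowerSeries.derivative ℂ
      (∏ l ∈ s, PowerSeries.mk (es (ψ l))) = (∑ l ∈ s, Q (ψ l)) *
      ∏ l ∈ s, PowerSeries.mk (es (ψ l)) := by
    intro s
    induction s using Finset.induction_on with
    | empty => simp
    | insert a s ha ih =>
      rw [prod_insert ha, sum_insert ha, Derivation.leibniz, smul_eq_mul, smul_eq_mul, mul_add,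
        mul_left_comm, ih, mul_left_comm PowerSeries.X (∏ l ∈ s, _), hlog (hψ a)]
      ring
  have hQs : ∑ l ∈ range n, Q (ψ l) = Q φ := by
    ext k
    simp only [hQ, map_sum, PowerSeries.coeff_mk]
    split_ifs with h
    · simp
    · exact (hp k (Nat.pos_of_ne_zero h)).symm
  have h2 := hprod (range n)
  rw [hQs] at h2
  ext k
  induction k using Nat.strong_induction_on with
  | _ k ih =>
    rcases Nat.eq_zero_or_pos k with rfl | hk
    · simp only [PowerSeries.coeff_mk, hes0 hφ, PowerSeries.coeff_zero_eq_constantCoeff, map_prod]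
      symm
      apply prod_eq_one
      intro l _
      rw [← PowerSeries.coeff_zero_eq_constantCoeff_apply, PowerSeries.coeff_mk, hes0 (hψ l)]
    · have e1 := congrArg (PowerSeries.coeff k) (hlog hφ)
      have e2 := congrArg (PowerSeries.coeff k) h2
      rw [hcoeff, hQE] at e1 e2
      have : (k : ℂ) ≠ 0 := by exact_mod_cast hk.ne'
      apply mul_left_cancel₀ this
      rw [e1, e2]
      apply sum_congr rfl
      intro i hi
      rw [mem_Icc] at hi
      rw [ih (k - i) (by omega)]

end newton

section field
variable {F : Type} [Field F] [Fintype F] {K : Type} [Field K] [Fintype K] [Algebra F K]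

lemma psum_field (φ : F[X] → ℂ) :
    psum φ (Module.finrank F K) = ∑ x : K, φ (minpoly F x) ^
      (Module.finrank F K / (minpoly F x).natDegree) := by
  have hi : ∀ x : K, IsIntegral F x := fun x => Algebra.IsIntegral.isIntegral x
  set i := Module.finrank F K with hidef
  have hipos : 0 < i := Module.finrank_pos
  have hdisj : Set.PairwiseDisjoint (↑i.divisors) (fun d => IR F d) := by
    intro a _ b _ hab
    rw [Function.onFun, Finset.disjoint_left]
    intro P h1 h2
    exact hab ((mem_IR.1 h1).2.1.symm.trans (mem_IR.1 h2).2.1)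
  have h1 : psum φ i = ∑ P ∈ i.divisors.biUnion (fun d => IR F d),
      (P.natDegree : ℂ) * φ P ^ (i / P.natDegree) := by
    rw [sum_biUnion hdisj, psum]
    refine sum_congr rfl fun d _ => sum_congr rfl fun P hP => ?_
    rw [(mem_IR.1 hP).2.1]
  rw [h1]
  have hmaps : ∀ x ∈ (univ : Finset K), minpoly F x ∈ i.divisors.biUnion (fun d => IR F d) := by
    intro x _
    rw [mem_biUnion]
    exact ⟨(minpoly F x).natDegree, Nat.mem_divisors.2 ⟨minpoly.degree_dvd (hi x), hipos.ne'⟩,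
      mem_IR.2 ⟨minpoly.monic (hi x), rfl, minpoly.irreducible (hi x)⟩⟩
  rw [← sum_fiberwise_of_maps_to hmaps]
  refine sum_congr rfl fun P hP => ?_
  rw [mem_biUnion] at hP
  obtain ⟨d, hd, hP⟩ := hP
  obtain ⟨hPm, hPd, hPi⟩ := mem_IR.1 hP
  rw [sum_congr rfl (g := fun _ => φ P ^ (i / P.natDegree))
    (by intro x hx; rw [(mem_filter.1 hx).2])]
  rw [sum_const, nsmul_eq_mul]
  congr 2
  have hex : ∃ x : K, aeval x P = 0 := by
    have : Fact (Irreducible P) := ⟨hPi⟩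
    have : FiniteDimensional F (AdjoinRoot P) := (AdjoinRoot.powerBasis hPi.ne_zero).finite
    have : Finite (AdjoinRoot P) := Module.finite_of_finite F
    have hfr : Module.finrank F (AdjoinRoot P) ∣ Module.finrank F K := by
      have : Module.finrank F (AdjoinRoot P) = d := by
        rw [(AdjoinRoot.powerBasis hPi.ne_zero).finrank, AdjoinRoot.powerBasis_dim, hPd]
      rw [this]; exact (Nat.mem_divisors.1 hd).1
    obtain ⟨f⟩ := FiniteField.nonempty_algHom_of_finrank_dvd hfr
    refine ⟨f (AdjoinRoot.root P), ?_⟩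
    rw [aeval_algHom_apply, AdjoinRoot.aeval_eq, AdjoinRoot.mk_self, map_zero]
  obtain ⟨x, hx⟩ := hex
  have hxP : P = minpoly F x := minpoly.eq_of_irreducible_of_monic hPi hx hPm
  have hsp : (P.map (algebraMap F K)).Splits := by
    rw [hxP]; exact Normal.splits inferInstance x
  have hsep : P.Separable := by rw [hxP]; exact Algebra.IsSeparable.isSeparable F x
  rw [← card_rootSet_eq_natDegree hsep hsp, ← Set.toFinset_card]
  congr 1
  ext y
  simp only [Set.mem_toFinset, mem_filter, mem_univ, true_and, mem_rootSet]
  constructor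
  · rintro ⟨_, h⟩
    exact (minpoly.eq_of_irreducible_of_monic hPi h hPm).symm
  · rintro rfl
    exact ⟨hPi.ne_zero, minpoly.aeval _ _⟩

/-- signed evaluation -/
noncomputable def ev (c : F) (g : F[X]) : F := (-1) ^ g.natDegree * g.eval c

lemma ev_norm (x : K) (c : F) :
    ev c (minpoly F x) ^ (Module.finrank F K / (minpoly F x).natDegree)
      = Algebra.norm F (x - algebraMap F K c) := by
  have hi : ∀ x : K, IsIntegral F x := fun x => Algebra.IsIntegral.isIntegral x
  rw [Algebra.norm_eq_norm_adjoin]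
  have h1 := Algebra.PowerBasis.norm_gen_eq_coeff_zero_minpoly
    (IntermediateField.adjoin.powerBasis (hi (x - algebraMap F K c)))
  rw [IntermediateField.adjoin.powerBasis_gen, IntermediateField.adjoin.powerBasis_dim,
    IntermediateField.minpoly_gen, minpoly.sub_algebraMap] at h1
  rw [h1]
  have h2 := Module.finrank_mul_finrank F
    (IntermediateField.adjoin F {x - algebraMap F K c}) K
  rw [IntermediateField.adjoin.finrank (hi _), minpoly.sub_algebraMap] at h2
  have h3 : ((minpoly F x).comp (X + C c)).natDegree = (minpoly F x).natDegree := by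
    rw [natDegree_comp, natDegree_X_add_C, mul_one]
  rw [h3] at h2
  rw [← h2, Nat.mul_div_cancel_left _ (minpoly.natDegree_pos (hi x)), h3, ev]
  congr 2
  rw [coeff_zero_eq_eval_zero, eval_comp]; simp

/-- the multiplicative function on polynomials -/
noncomputable def phi (A B : MulChar F ℂ) (s : Finset F) (g : F[X]) : ℂ :=
  A (ev 0 g) * ∏ c ∈ s, B (ev c g)

lemma ev_mul (c : F) {g h : F[X]} (hg : g.Monic) (hh : h.Monic) :
    ev c (g * h) = ev c g * ev c h := by
  rw [ev, ev, ev, hg.natDegree_mul hh, eval_mul, pow_add]; ring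

lemma phi_mulOn (A B : MulChar F ℂ) (s : Finset F) : MulOn (phi A B s) := by
  constructor
  · simp [phi, ev]
  · intro g h hg hh
    simp only [phi, ev_mul _ hg hh, map_mul, prod_mul_distrib]
    ring

lemma psum_phi (A B : MulChar F ℂ) (s : Finset F) :
    psum (phi A B s) (Module.finrank F K) = ∑ x : K, A (Algebra.norm F x) *
      ∏ c ∈ s, B (Algebra.norm F (x - algebraMap F K c)) := by
  rw [psum_field (K := K)]
  refine sum_congr rfl fun x _ => ?_
  rw [phi, mul_pow, ← prod_pow, ← map_pow, ev_norm, map_zero, sub_zero]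
  congr 1
  refine prod_congr rfl fun c _ => ?_
  rw [← map_pow, ev_norm]

lemma kummer {n : ℕ} (hn : 0 < n) {ζ : K} (hζ : IsPrimitiveRoot ζ n) {χ : MulChar F ℂ}
    (hχ : orderOf χ = n) {x : K} (hx : x ≠ 0) :
    (((univ : Finset K).filter (fun y => y ^ n = x)).card : ℂ)
      = ∑ l ∈ range n, χ (Algebra.norm F x) ^ l := by
  have hχn : χ ^ n = 1 := hχ ▸ pow_orderOf_eq_one χ
  have hcard : ((univ : Finset K).filter (fun y => y ^ n = x)).card
      = if ∃ α : K, α ^ n = x then n else 0 := by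
    have h0 : (if ∃ α : K, α ^ n = x then n else 0) = (nthRoots n x).card := by
      rw [hζ.card_nthRoots x]; congr
    rw [h0, ← Multiset.toFinset_card_of_nodup (hζ.nthRoots_nodup hx)]
    congr 1
    ext y
    simp [mem_nthRoots hn]
  have hpow : ∀ y : K, y ≠ 0 → χ (Algebra.norm F y) ^ n = 1 := by
    intro y hy
    have : IsUnit (Algebra.norm F y) := (Algebra.norm_ne_zero_iff.2 hy).isUnit
    rw [← MulChar.pow_apply' _ hn.ne', hχn, MulChar.one_apply this]
  rw [hcard]
  split_ifs with h
  · obtain ⟨y, rfl⟩ := h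
    have hy : y ≠ 0 := by rintro rfl; simp [hn.ne'] at hx
    rw [map_pow, map_pow, hpow y hy]
    simp
  · have hne : χ (Algebra.norm F x) ≠ 1 := by
      intro h1
      apply h
      obtain ⟨γ, hγ⟩ := IsCyclic.exists_generator (α := Kˣ)
      have hγ' : ∀ u : Kˣ, ∃ k : ℕ, γ ^ k = u := by
        intro u
        exact (mem_powers_iff_mem_zpowers.2 (hγ u))
      obtain ⟨k, hk⟩ := hγ' (Units.mk0 x hx)
      have hk' : (γ : K) ^ k = x := by
        have := congrArg Units.val hk
        simpa using this
      have hchi : χ ^ k = 1 := by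
        rw [MulChar.eq_one_iff]
        intro a
        obtain ⟨b, hb⟩ := FiniteField.unitsMap_norm_surjective F K a
        obtain ⟨m, rfl⟩ := hγ' b
        rw [MulChar.pow_apply_coe, ← hb]
        simp only [Units.coe_map, Units.val_pow_eq_pow_val]
        have hγk : χ (Algebra.norm F (γ : K)) ^ k = 1 := by rw [← map_pow, ← map_pow, hk', h1]
        rw [map_pow, map_pow, ← pow_mul, mul_comm, pow_mul, hγk, one_pow]
      obtain ⟨j, rfl⟩ : n ∣ k := hχ ▸ orderOf_dvd_of_pow_eq_one hchi
      exact ⟨(γ : K) ^ j, by rw [← pow_mul, mul_comm, hk']⟩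
    rw [geom_sum_eq hne, hpow x hx]
    simp

lemma psum_rel_field {n : ℕ} (hn : 0 < n) {ζ : F} (hζ : IsPrimitiveRoot ζ n) {χ : MulChar F ℂ}
    (hχ : orderOf χ = n) (A B : MulChar F ℂ) :
    psum (phi (A ^ n) B (nthRootsFinset n (1 : F))) (Module.finrank F K)
      = ∑ l ∈ range n, psum (phi (A * χ ^ l) B {1}) (Module.finrank F K) := by
  simp only [psum_phi (K := K), prod_singleton]
  have hζK : IsPrimitiveRoot (algebraMap F K ζ) n :=
    hζ.map_of_injective (algebraMap F K).injective
  set h : K → ℂ := fun x => A (Algebra.norm F x) * B (Algebra.norm F (x - 1)) with hh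
  have e1 : ∀ y : K, (A ^ n) (Algebra.norm F y) *
      ∏ c ∈ nthRootsFinset n (1 : F), B (Algebra.norm F (y - algebraMap F K c)) = h (y ^ n) := by
    intro y
    simp only [hh]
    rw [MulChar.pow_apply' _ hn.ne', map_pow, map_pow, ← map_prod, ← map_prod]
    congr 3
    have := X_pow_sub_one_eq_prod hn hζ
    have := congrArg (aeval y) this
    simpa [map_prod] using this.symm
  rw [sum_congr rfl (fun y _ => e1 y)]
  rw [← sum_fiberwise (univ : Finset K) (fun y => y ^ n) (fun y => h (y ^ n)), sum_comm (s := range n)]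
  refine sum_congr rfl fun x _ => ?_
  rw [sum_congr rfl (g := fun _ => h x) (by intro y hy; rw [(mem_filter.1 hy).2]),
    sum_const, nsmul_eq_mul]
  by_cases hx : x = 0
  · subst hx
    simp [hh, MulChar.map_zero]
  · rw [kummer hn hζK hχ hx, sum_mul]
    refine sum_congr rfl fun l _ => ?_
    have : IsUnit (Algebra.norm F x) := (Algebra.norm_ne_zero_iff.2 hx).isUnit
    obtain ⟨u, hu⟩ := this
    simp only [hh]
    rw [map_one, ← hu, MulChar.mul_apply, MulChar.pow_apply_coe]
    ring
end field

section field2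
variable {F : Type} [Field F] [Fintype F]
lemma psum_rel {n : ℕ} (hn : 0 < n) {ζ : F} (hζ : IsPrimitiveRoot ζ n) {χ : MulChar F ℂ}
    (hχ : orderOf χ = n) (A B : MulChar F ℂ) (i : ℕ) (hi : 0 < i) :
    psum (phi (A ^ n) B (nthRootsFinset n (1 : F))) i
      = ∑ l ∈ range n, psum (phi (A * χ ^ l) B {1}) i := by
  obtain ⟨p, hp⟩ := CharP.exists F
  have : Fact (Nat.Prime p) := ⟨CharP.char_is_prime F p⟩
  have : NeZero i := ⟨hi.ne'⟩
  let : Fintype (FiniteField.Extension F p i) := Fintype.ofFinite _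
  have := psum_rel_field (K := FiniteField.Extension F p i) hn hζ hχ A B
  rwa [FiniteField.finrank_extension] at this
end field2

section gauss
variable {F : Type} [Field F] [Fintype F]

lemma gauss_ne {θ : AddChar F ℂ} (hθ : θ ≠ 1) (A : MulChar F ℂ) : gaussSum A θ ≠ 0 := by
  by_cases h : A = 1
  · rw [h, gaussSum_one_left hθ]; norm_num
  · exact gaussSum_ne_zero_of_nontrivial (by exact_mod_cast Fintype.card_ne_zero) h
      (AddChar.IsPrimitive.of_ne_one hθ)

lemma gauss_shift (θ : AddChar F ℂ) (C : MulChar F ℂ) {x : F} (hx : x ≠ 0) :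
    ∑ y, C y * θ (x * y) = C⁻¹ x * gaussSum C θ := by
  have := gaussSum_mulShift_eq C θ (Units.mk0 x hx)
  rw [Units.val_mk0] at this
  rw [← this]
  simp [gaussSum, AddChar.mulShift_apply]

lemma gauss_shift' (θ : AddChar F ℂ) {C : MulChar F ℂ} (hC : C ≠ 1) (x : F) :
    C x * gaussSum C⁻¹ θ = ∑ y, C⁻¹ y * θ (x * y) := by
  by_cases hx : x = 0
  · subst hx
    have := MulChar.sum_eq_zero_of_ne_one (inv_ne_one.2 hC)
    simp [MulChar.map_zero, this]
  · rw [gauss_shift θ C⁻¹ hx, inv_inv]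

lemma addChar_sum (θ : AddChar F ℂ) {ι : Type} (s : Finset ι) (f : ι → F) :
    θ (∑ i ∈ s, f i) = ∏ i ∈ s, θ (f i) := by
  induction s using Finset.induction_on with
  | empty => simp
  | insert a s ha ih => rw [sum_insert ha, prod_insert ha, AddChar.map_add_eq_mul, ih]

lemma jac (θ : AddChar F ℂ) {C : MulChar F ℂ} (hC : C ≠ 1) (B : MulChar F ℂ)
    {ι : Type} [Fintype ι] [DecidableEq ι] :
    (∑ c : ι → F, C (∑ i, c i - 1) * ∏ i, B (c i)) * gaussSum C⁻¹ θ
      = (C⁻¹ * B⁻¹ ^ Fintype.card ι) (-1) * gaussSum (C⁻¹ * B⁻¹ ^ Fintype.card ι) θ *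
        gaussSum B θ ^ Fintype.card ι := by
  have h1 : ∀ c : ι → F, C (∑ i, c i - 1) * (∏ i, B (c i)) * gaussSum C⁻¹ θ
      = ∑ y, C⁻¹ y * θ (-y) * ∏ i, (B (c i) * θ (y * c i)) := by
    intro c
    rw [mul_right_comm, gauss_shift' θ hC, sum_mul]
    refine sum_congr rfl fun y _ => ?_
    rw [prod_mul_distrib]
    have : θ ((∑ i, c i - 1) * y) = θ (-y) * ∏ i, θ (y * c i) := by
      rw [← addChar_sum, ← AddChar.map_add_eq_mul, ← mul_sum]
      congr 1; ring
    rw [this]; ring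
  rw [sum_mul, sum_congr rfl (fun c _ => h1 c), sum_comm]
  have h2 : ∀ y : F, ∑ c : ι → F, C⁻¹ y * θ (-y) * ∏ i, (B (c i) * θ (y * c i))
      = (C⁻¹ * B⁻¹ ^ Fintype.card ι) y * θ ((-1) * y) * gaussSum B θ ^ Fintype.card ι := by
    intro y
    rw [← mul_sum]
    have h3 : ∑ c : ι → F, ∏ i, (B (c i) * θ (y * c i))
        = (∑ c : F, B c * θ (y * c)) ^ Fintype.card ι := by
      have := Finset.prod_univ_sum (fun _ : ι => (univ : Finset F))
        (fun _ c => B c * θ (y * c))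
      rw [Fintype.piFinset_univ] at this
      rw [← this]; simp
    rw [h3]
    by_cases hy : y = 0
    · subst hy; simp [MulChar.map_zero]
    · rw [gauss_shift θ B hy, mul_pow, neg_one_mul, MulChar.mul_apply]
      have : (B⁻¹ ^ Fintype.card ι) y = B⁻¹ y ^ Fintype.card ι := by
        have := MulChar.pow_apply_coe B⁻¹ (Fintype.card ι) (Units.mk0 y hy)
        simpa using this
      rw [this]; ring
  rw [sum_congr rfl (fun y _ => h2 y), ← sum_mul, gauss_shift θ _ (by simp : (-1 : F) ≠ 0),
    MulChar.inv_apply', inv_neg_one]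

lemma sum_roots {n : ℕ} (hn : 0 < n) {ζ : F} (hζ : IsPrimitiveRoot ζ n) {g : F[X]}
    (hg : g ∈ MP F n) :
    ∑ c ∈ nthRootsFinset n (1 : F), g.eval c = n * (g.eval 0 + 1) := by
  obtain ⟨hm, hd⟩ := mem_MP.1 hg
  have hpow : ∀ j, 0 < j → j < n → ∑ c ∈ nthRootsFinset n (1 : F), c ^ j = 0 := by
    intro j h1 h2
    have h3 : ∑ c ∈ nthRootsFinset n (1 : F), c ^ j
        = ∑ c ∈ nthRootsFinset n (1 : F), (ζ * c) ^ j := by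
      symm
      apply sum_bij (fun c _ => ζ * c)
      · intro c hc
        rw [mem_nthRootsFinset hn] at hc ⊢
        rw [mul_pow, hc, hζ.pow_eq_one, one_mul]
      · intro a _ b _ h
        exact mul_left_cancel₀ (hζ.ne_zero hn.ne') h
      · intro b hb
        rw [mem_nthRootsFinset hn] at hb
        refine ⟨ζ⁻¹ * b, ?_, by rw [mul_inv_cancel_left₀ (hζ.ne_zero hn.ne')]⟩
        rw [mem_nthRootsFinset hn, mul_pow, hb, inv_pow, hζ.pow_eq_one]; simp
      · intros; rfl
    simp only [mul_pow, ← mul_sum] at h3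
    have h4 : ζ ^ j ≠ 1 := hζ.pow_ne_one_of_pos_of_lt h1.ne' h2
    have h5 : (1 - ζ ^ j) * ∑ c ∈ nthRootsFinset n (1 : F), c ^ j = 0 := by
      rw [sub_mul, one_mul, ← h3, sub_self]
    rcases mul_eq_zero.1 h5 with h | h
    · exact absurd (sub_eq_zero.1 h).symm h4
    · exact h
  simp only [eval_eq_sum_range, hd]
  rw [sum_comm]
  simp only [← mul_sum]
  have hcard : (nthRootsFinset n (1 : F)).card = n := hζ.card_nthRootsFinset
  obtain ⟨k, rfl⟩ : ∃ k, n = k + 1 := ⟨n - 1, by omega⟩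
  rw [sum_range_succ, sum_range_succ', sum_eq_zero (s := range k)]
  · have hlc : g.coeff (k + 1) = 1 := by rw [← hd]; exact hm
    have : ∑ c ∈ nthRootsFinset (k + 1) (1 : F), c ^ (k + 1) = ((k + 1 : ℕ) : F) := by
      rw [sum_congr rfl (g := fun _ => (1 : F))
        (fun c hc => (mem_nthRootsFinset hn _).1 hc)]
      simp [hcard]
    have e0 : ∑ x ∈ range (k + 1 + 1), g.coeff x * (0 : F) ^ x = g.coeff 0 := by
      rw [sum_range_succ']; simp
    rw [this, hlc, e0]
    simp [hcard]
    ring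
  · intro j hj
    rw [mem_range] at hj
    rw [hpow (j + 1) (by omega) (by omega), mul_zero]

lemma es_top {θ : AddChar F ℂ} {n : ℕ} (hn : 0 < n) {ζ : F} (hζ : IsPrimitiveRoot ζ n)
    (A B : MulChar F ℂ) (hA : A ^ n ≠ 1) :
    es (phi (A ^ n) B (nthRootsFinset n (1 : F))) n * gaussSum (A ^ n)⁻¹ θ
      = B (n : F) ^ n * gaussSum ((A ^ n)⁻¹ * (B ^ n)⁻¹) θ * gaussSum B θ ^ n := by
  have hn0 : (n : F) ≠ 0 := by
    have : NeZero n := ⟨hn.ne'⟩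
    exact (hζ.neZero').ne
  set s := nthRootsFinset n (1 : F) with hs
  have hcard : s.card = n := hζ.card_nthRootsFinset
  have hfc : Fintype.card s = n := by simp [hcard]
  have h1 : es (phi (A ^ n) B s) n
      = ∑ c : s → F, (A ^ n) ((-1) ^ n * ((∑ i, c i) / n - 1)) * ∏ i, B ((-1) ^ n * c i) := by
    rw [es]
    apply sum_bij (fun g _ => fun i : s => g.eval (i : F))
    · intros; exact mem_univ _
    · intro g hg h hh hgh
      obtain ⟨g1, g2⟩ := mem_MP.1 hg
      obtain ⟨h1, h2⟩ := mem_MP.1 hh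
      have hdeg : (g - h).degree < s.card := by
        rw [hcard, ← g2, ← degree_eq_natDegree g1.ne_zero]
        apply degree_sub_lt_left _ g1.ne_zero
        · rw [g1.leadingCoeff, h1.leadingCoeff]
        · rw [degree_eq_natDegree g1.ne_zero, degree_eq_natDegree h1.ne_zero, g2, h2]
      have := eq_zero_of_degree_lt_of_eval_finset_eq_zero s hdeg (fun x hx => by
        have := congrFun hgh ⟨x, hx⟩
        simp only at this
        rw [eval_sub, this, sub_self])
      exact sub_eq_zero.1 this
    · intro c _
      set r := Lagrange.interpolate s id (fun x => if hx : x ∈ s then c ⟨x, hx⟩ - 1 else 0) with hr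
      have hrd : r.degree < (n : ℕ) := by
        have := Lagrange.degree_interpolate_lt (s := s) (v := id) (fun x => if hx : x ∈ s then c ⟨x, hx⟩ - 1 else 0) Function.injective_id.injOn
        rwa [hcard] at this
      refine ⟨X ^ n + r, mem_MP.2 ⟨monic_X_pow_add hrd, ?_⟩, ?_⟩
      · rw [natDegree_add_eq_left_of_degree_lt, natDegree_X_pow]
        rwa [degree_X_pow]
      · ext ⟨x, hx⟩
        have hxn : x ^ n = 1 := (mem_nthRootsFinset hn _).1 hx
        have := Lagrange.eval_interpolate_at_node (s := s) (v := id) (fun x => if hx : x ∈ s then c ⟨x, hx⟩ - 1 else 0) Function.injective_id.injOn hx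
        simp only [id] at this
        show eval x (X ^ n + r) = c ⟨x, hx⟩
        rw [eval_add, eval_pow, eval_X, hxn, hr, this, dif_pos hx]
        ring
    · intro g hg
      have hsum := sum_roots hn hζ hg
      have e1 : (∑ i : s, g.eval (i : F)) / n - 1 = g.eval 0 := by
        rw [sum_coe_sort s (fun x => g.eval x), hsum]
        field_simp
        ring
      rw [phi, e1, ← prod_coe_sort s]
      simp only [ev, (mem_MP.1 hg).2]
  have h2 : es (phi (A ^ n) B s) n = (A ^ n) ((-1) ^ n) * B ((-1) ^ n) ^ n * B (n : F) ^ n *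
      ∑ c : s → F, (A ^ n) (∑ i, c i - 1) * ∏ i, B (c i) := by
    rw [h1, mul_sum]
    symm
    apply Fintype.sum_equiv (Equiv.piCongrRight (fun _ : s => Equiv.mulLeft₀ (n : F) hn0))
    intro c
    have e2 : (∑ i : s, (n : F) * c i) / n - 1 = ∑ i, c i - 1 := by
      rw [← mul_sum, mul_div_cancel_left₀ _ hn0]
    have hm : ∀ a, (Equiv.mulLeft₀ (n : F) hn0) a = n * a := fun _ => rfl
    simp only [Equiv.piCongrRight_apply, Pi.map_apply, hm, e2, map_mul,
      prod_mul_distrib, prod_const, card_univ, hfc]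
    ring
  rw [h2, mul_assoc, jac θ hA B, hfc]
  have hsq : ∀ D : MulChar F ℂ, D (-1) ^ (n * n + n) = 1 := by
    intro D
    have hev : Even (n * n + n) := by
      rw [show n * n + n = n * (n + 1) by ring]; exact Nat.even_mul_succ_self n
    rw [← map_pow, hev.neg_one_pow, map_one]
  have hsign : (A ^ n) ((-1) ^ n) * B ((-1) ^ n) ^ n * ((A ^ n)⁻¹ * B⁻¹ ^ n) (-1) = 1 := by
    rw [MulChar.mul_apply, MulChar.inv_apply', inv_neg_one, MulChar.pow_apply' _ hn.ne',
      MulChar.pow_apply' _ hn.ne', MulChar.pow_apply' _ hn.ne', MulChar.inv_apply', inv_neg_one,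
      map_pow, map_pow]
    have ha := hsq A
    have hb := hsq B
    rw [pow_add, pow_mul] at ha hb
    linear_combination (B (-1) ^ n) ^ n * B (-1) ^ n * ha + hb
  rw [inv_pow]
  rw [inv_pow] at hsign
  linear_combination (B (n : F) ^ n * gaussSum ((A ^ n)⁻¹ * (B ^ n)⁻¹) θ * gaussSum B θ ^ n) * hsign

lemma es_high (D : MulChar F ℂ) {B : MulChar F ℂ} (hB : B ≠ 1) {k : ℕ} (hk : 2 ≤ k) :
    es (phi D B {1}) k = 0 := by
  have hshift : ∀ c : F, es (phi D B {1}) k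
      = ∑ g ∈ MP F k, D (ev 0 g) * B ((-1) ^ k * (g.eval 1 + c)) := by
    intro c
    rw [es]
    have hlt : ∀ (g : F[X]) (a : F), g ∈ MP F k → (C a * X).degree < g.degree := by
      intro g a hg
      obtain ⟨h1, h2⟩ := mem_MP.1 hg
      rw [degree_eq_natDegree h1.ne_zero, h2]
      refine lt_of_le_of_lt (degree_C_mul_X_le a) ?_
      exact_mod_cast hk
    have hmem : ∀ (g : F[X]) (a : F), g ∈ MP F k → g + C a * X ∈ MP F k := by
      intro g a hg
      obtain ⟨h1, h2⟩ := mem_MP.1 hg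
      refine mem_MP.2 ⟨h1.add_of_left (hlt g a hg), ?_⟩
      rw [natDegree_add_eq_left_of_degree_lt (hlt g a hg), h2]
    symm
    apply sum_bij (fun g _ => g + C c * X)
    · intro g hg; exact hmem g c hg
    · intro a _ b _ h; exact add_right_cancel h
    · intro g hg
      exact ⟨g + C (-c) * X, hmem g _ hg, by simp⟩
    · intro g hg
      rw [phi, prod_singleton]
      simp only [ev, (mem_MP.1 hg).2, (mem_MP.1 (hmem g c hg)).2]
      simp
  have h1 : (Fintype.card F : ℂ) * es (phi D B {1}) k = 0 := by
    have : ∑ c : F, es (phi D B {1}) k = 0 := by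
      rw [sum_congr rfl (fun c _ => hshift c), sum_comm]
      apply sum_eq_zero
      intro g _
      rw [← mul_sum]
      simp only [map_mul, ← mul_sum]
      have : ∑ c : F, B (g.eval 1 + c) = 0 := by
        rw [← MulChar.sum_eq_zero_of_ne_one hB]
        exact Fintype.sum_equiv (Equiv.addLeft (g.eval 1)) _ _ (fun _ => rfl)
      rw [this]; simp
    simpa using this
  rcases mul_eq_zero.1 h1 with h | h
  · exact absurd h (by exact_mod_cast Fintype.card_ne_zero)
  · exact h

lemma hd_main {θ : AddChar F ℂ} (hθ : θ ≠ 1) {n : ℕ} (hn : 0 < n) {ζ : F}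
    (hζ : IsPrimitiveRoot ζ n) {χ : MulChar F ℂ} (hχ : orderOf χ = n)
    (A B : MulChar F ℂ) (hA : A ^ n ≠ 1) (hB : B ≠ 1) :
    (∏ l ∈ range n, gaussSum ((A * χ ^ l)⁻¹ * B⁻¹) θ) * gaussSum (A ^ n)⁻¹ θ
      = B (n : F) ^ n * (∏ l ∈ range n, gaussSum (A * χ ^ l)⁻¹ θ) *
        gaussSum ((A ^ n)⁻¹ * (B ^ n)⁻¹) θ := by
  have hχn : χ ^ n = 1 := hχ ▸ pow_orderOf_eq_one χ
  have hD : ∀ l, A * χ ^ l ≠ 1 := by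
    intro l h
    apply hA
    have := congrArg (· ^ n) h
    simpa [mul_pow, ← pow_mul, mul_comm l n, pow_mul χ n l, hχn] using this
  have hser := es_prod (phi_mulOn (A ^ n) B (nthRootsFinset n (1 : F)))
    (ψ := fun l => phi (A * χ ^ l) B {1}) (fun l => phi_mulOn _ _ _)
    (psum_rel hn hζ hχ A B)
  have hMP0 : MP F 0 = {1} := by
    ext g
    rw [mem_MP, mem_singleton]
    constructor
    · rintro ⟨h1, h2⟩; exact Polynomial.eq_one_of_monic_natDegree_zero h1 h2
    · rintro rfl; simp
  set J : ℕ → ℂ := fun l => es (phi (A * χ ^ l) B {1}) 1 with hJ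
  have hlin : ∀ l, PowerSeries.mk (es (phi (A * χ ^ l) B {1}))
      = ((1 + C (J l) * X : ℂ[X]) : PowerSeries ℂ) := by
    intro l
    ext k
    rw [PowerSeries.coeff_mk, Polynomial.coeff_coe]
    match k with
    | 0 => simp [es, hMP0, (phi_mulOn _ _ _).one]
    | 1 => simp [hJ, coeff_one]
    | k + 2 =>
      rw [es_high _ hB (by omega)]
      simp [coeff_one, coeff_X]
  have hcoef : es (phi (A ^ n) B (nthRootsFinset n (1 : F))) n = ∏ l ∈ range n, J l := by
    have h1 := congrArg (PowerSeries.coeff n) hser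
    rw [PowerSeries.coeff_mk, prod_congr rfl (fun l _ => hlin l)] at h1
    have h2 : (∏ l ∈ range n, ((1 + C (J l) * X : ℂ[X]) : PowerSeries ℂ))
        = ((∏ l ∈ range n, (1 + C (J l) * X) : ℂ[X]) : PowerSeries ℂ) := by
      exact (map_prod (Polynomial.coeToPowerSeries.ringHom (R := ℂ))
        (fun l => (1 + C (J l) * X : ℂ[X])) (range n)).symm
    rw [h2, Polynomial.coeff_coe] at h1
    have h3 := coeff_prod_of_natDegree_le (range n) (fun l => (1 + C (J l) * X : ℂ[X])) 1
      (fun l _ => by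
        refine (natDegree_add_le _ _).trans ?_
        simpa using (natDegree_C_mul_le (J l) X).trans natDegree_X_le)
    rw [card_range, mul_one] at h3
    rw [h1, h3]
    refine prod_congr rfl fun l _ => ?_
    simp [coeff_one]
  have hJl : ∀ l, J l * gaussSum (A * χ ^ l)⁻¹ θ
      = gaussSum ((A * χ ^ l)⁻¹ * B⁻¹) θ * gaussSum B θ := by
    intro l
    have := es_top (θ := θ) one_pos (IsPrimitiveRoot.one (M := F)) (A * χ ^ l) B
      (by rw [pow_one]; exact hD l)
    have hs1 : nthRootsFinset 1 (1 : F) = {1} := by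
      ext x; rw [mem_nthRootsFinset one_pos]; simp
    rw [hs1] at this
    simpa [hJ] using this
  have htop := es_top (θ := θ) hn hζ A B hA
  rw [hcoef] at htop
  have hprod : (∏ l ∈ range n, J l) * ∏ l ∈ range n, gaussSum (A * χ ^ l)⁻¹ θ
      = (∏ l ∈ range n, gaussSum ((A * χ ^ l)⁻¹ * B⁻¹) θ) * gaussSum B θ ^ n := by
    rw [← prod_mul_distrib, prod_congr rfl (fun l _ => hJl l), prod_mul_distrib]
    simp
  have hg : gaussSum B θ ^ n ≠ 0 := pow_ne_zero _ (gauss_ne hθ B)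
  apply mul_right_cancel₀ hg
  linear_combination (∏ l ∈ range n, gaussSum (A * χ ^ l)⁻¹ θ) * htop
    - gaussSum (A ^ n)⁻¹ θ * hprod

end gauss

section final
variable {F : Type} [Field F] [Fintype F]

lemma pow_root {n : ℕ} (hn : 0 < n) {χ : MulChar F ℂ} (hχ : orderOf χ = n) {ψ : MulChar F ℂ}
    (hψ : ψ ^ n = 1) : ∃ j < n, ψ = χ ^ j := by
  obtain ⟨γ, hγ⟩ := IsCyclic.exists_generator (α := Fˣ)
  have hχn : χ ^ n = 1 := hχ ▸ pow_orderOf_eq_one χ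
  have hp : IsPrimitiveRoot (χ (γ : F)) n := by
    refine IsPrimitiveRoot.iff_def _ _ |>.2 ⟨?_, ?_⟩
    · rw [← MulChar.pow_apply_coe, hχn, MulChar.one_apply_coe]
    · intro l hl
      rw [← hχ]
      apply orderOf_dvd_of_pow_eq_one
      rw [MulChar.eq_iff hγ, MulChar.pow_apply_coe, hl, MulChar.one_apply_coe]
  have : NeZero n := ⟨hn.ne'⟩
  obtain ⟨j, hj, h⟩ := hp.eq_pow_of_pow_eq_one (ξ := ψ (γ : F)) (by
    rw [← MulChar.pow_apply_coe, hψ, MulChar.one_apply_coe])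
  refine ⟨j, hj, ?_⟩
  rw [MulChar.eq_iff hγ, MulChar.pow_apply_coe, h]

/-- Product of Gauss sums over a coset. -/
noncomputable def GP (θ : AddChar F ℂ) (n : ℕ) (χ A : MulChar F ℂ) : ℂ :=
  ∏ l ∈ range n, gaussSum (A * χ ^ l) θ

lemma GP_ne {θ : AddChar F ℂ} (hθ : θ ≠ 1) (n : ℕ) (χ A : MulChar F ℂ) : GP θ n χ A ≠ 0 :=
  prod_ne_zero_iff.2 fun _ _ => gauss_ne hθ _

lemma GP_shift (θ : AddChar F ℂ) {n : ℕ} {χ : MulChar F ℂ} (hχn : χ ^ n = 1)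
    (A : MulChar F ℂ) (j : ℕ) : GP θ n χ (A * χ ^ j) = GP θ n χ A := by
  induction j with
  | zero => simp
  | succ j ih =>
    rw [← ih]
    generalize A = A
    rw [pow_succ, ← mul_assoc]
    generalize A * χ ^ j = D
    unfold GP
    rcases n with _ | k
    · simp
    · rw [prod_range_succ, prod_range_succ' (fun l => gaussSum (D * χ ^ l) θ)]
      congr 1
      · refine prod_congr rfl fun l _ => ?_
        rw [mul_assoc, ← pow_succ']
      · rw [mul_assoc, ← pow_succ', hχn, pow_zero]

lemma hd_all {θ : AddChar F ℂ} (hθ : θ ≠ 1) {n : ℕ} (hn : 0 < n) {ζ : F}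
    (hζ : IsPrimitiveRoot ζ n) {χ : MulChar F ℂ} (hχ : orderOf χ = n)
    (A ψ : MulChar F ℂ) :
    GP θ n χ (A * ψ) * gaussSum (A ^ n) θ
      = ψ⁻¹ (n : F) ^ n * GP θ n χ A * gaussSum (A ^ n * ψ ^ n) θ := by
  have hn0 : (n : F) ≠ 0 := by
    have : NeZero n := ⟨hn.ne'⟩
    exact (hζ.neZero').ne
  have hχn : χ ^ n = 1 := hχ ▸ pow_orderOf_eq_one χ
  have case1 : ∀ A ψ : MulChar F ℂ, A ^ n ≠ 1 → GP θ n χ (A * ψ) * gaussSum (A ^ n) θ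
      = ψ⁻¹ (n : F) ^ n * GP θ n χ A * gaussSum (A ^ n * ψ ^ n) θ := by
    intro A ψ hA
    by_cases hψ : ψ = 1
    · subst hψ
      simp [MulChar.one_apply hn0.isUnit]
    · have := hd_main hθ hn hζ (χ := χ⁻¹) (by rw [orderOf_inv, hχ]) A⁻¹ ψ⁻¹
        (by rw [inv_pow]; exact inv_ne_one.2 hA) (inv_ne_one.2 hψ)
      simp only [mul_inv, inv_pow, inv_inv] at this
      unfold GP
      simp only [mul_right_comm A ψ]
      exact this
  by_cases hA : A ^ n = 1
  · by_cases hψ : ψ ^ n = 1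
    · obtain ⟨j, -, rfl⟩ := pow_root hn hχ hψ
      rw [GP_shift θ hχn, hψ, mul_one, ← MulChar.pow_apply' _ hn.ne', inv_pow, hψ, inv_one,
        MulChar.one_apply hn0.isUnit, one_mul]
    · have h1 := case1 (A * ψ) ψ⁻¹ (by rw [mul_pow, hA, one_mul]; exact hψ)
      rw [mul_inv_cancel_right, inv_inv, mul_pow, inv_pow, mul_inv_cancel_right] at h1
      have h2 : ψ⁻¹ (n : F) ^ n * ψ (n : F) ^ n = 1 := by
        rw [← mul_pow, ← MulChar.mul_apply, inv_mul_cancel, MulChar.one_apply hn0.isUnit, one_pow]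
      linear_combination -(ψ⁻¹ (n : F) ^ n) * h1 - (GP θ n χ (A * ψ) * gaussSum (A ^ n) θ) * h2
  · exact case1 A ψ hA

lemma term_eq {θ : AddChar F ℂ} (hθ : θ ≠ 1) {n : ℕ} (hn : 0 < n) {ζ : F}
    (hζ : IsPrimitiveRoot ζ n) {χ : MulChar F ℂ} (hχ : orderOf χ = n)
    (A B ψ : MulChar F ℂ) :
    ∏ l : Fin n, (gaussSum (A * χ ^ (l : ℕ) * ψ) θ / gaussSum (A * χ ^ (l : ℕ)) θ *
        (gaussSum ((B * χ ^ (l : ℕ) * ψ)⁻¹) θ / gaussSum ((B * χ ^ (l : ℕ))⁻¹) θ))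
      = gaussSum (A ^ n * ψ ^ n) θ / gaussSum (A ^ n) θ *
        (gaussSum ((B ^ n * ψ ^ n)⁻¹) θ / gaussSum ((B ^ n)⁻¹) θ) := by
  have hn0 : (n : F) ≠ 0 := by
    have : NeZero n := ⟨hn.ne'⟩
    exact (hζ.neZero').ne
  have h1 := hd_all hθ hn hζ hχ A ψ
  have h2 := hd_all hθ hn hζ (χ := χ⁻¹) (by rw [orderOf_inv, hχ]) B⁻¹ ψ⁻¹
  have h3 : ψ⁻¹ (n : F) ^ n * ψ (n : F) ^ n = 1 := by
    rw [← mul_pow, ← MulChar.mul_apply, inv_mul_cancel, MulChar.one_apply hn0.isUnit, one_pow]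
  have e : ∏ l : Fin n, (gaussSum (A * χ ^ (l : ℕ) * ψ) θ / gaussSum (A * χ ^ (l : ℕ)) θ *
        (gaussSum ((B * χ ^ (l : ℕ) * ψ)⁻¹) θ / gaussSum ((B * χ ^ (l : ℕ))⁻¹) θ))
      = GP θ n χ (A * ψ) / GP θ n χ A * (GP θ n χ⁻¹ (B⁻¹ * ψ⁻¹) / GP θ n χ⁻¹ B⁻¹) := by
    unfold GP
    rw [← prod_div_distrib, ← prod_div_distrib, ← prod_mul_distrib, ← Fin.prod_univ_eq_prod_range
      (fun l => gaussSum (A * ψ * χ ^ l) θ / gaussSum (A * χ ^ l) θ *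
        (gaussSum (B⁻¹ * ψ⁻¹ * χ⁻¹ ^ l) θ / gaussSum (B⁻¹ * χ⁻¹ ^ l) θ))]
    refine prod_congr rfl fun l _ => ?_
    rw [mul_right_comm A ψ, mul_right_comm B⁻¹ ψ⁻¹]
    simp only [mul_inv, inv_pow]
  rw [e]
  simp only [mul_inv]
  simp only [inv_pow, inv_inv] at h2
  have g1 := GP_ne hθ n χ A
  have g2 := GP_ne hθ n χ⁻¹ B⁻¹
  have g3 := gauss_ne hθ (A ^ n)
  have g4 := gauss_ne hθ (B ^ n)⁻¹
  rw [div_mul_div_comm, div_mul_div_comm, div_eq_div_iff (mul_ne_zero g1 g2) (mul_ne_zero g3 g4)]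
  generalize GP θ n χ (A * ψ) = a at *
  generalize GP θ n χ⁻¹ (B⁻¹ * ψ⁻¹) = b at *
  calc _ = (a * gaussSum (A ^ n) θ) * (b * gaussSum (B ^ n)⁻¹ θ) := by ring
    _ = _ := by
      rw [h1, h2]
      linear_combination (GP θ n χ A * gaussSum (A ^ n * ψ ^ n) θ * GP θ n χ⁻¹ B⁻¹ *
        gaussSum ((B ^ n)⁻¹ * (ψ ^ n)⁻¹) θ) * h3

lemma is_pow {n : ℕ} (hn : 0 < n) {ζ : Fˣ} (hζ : orderOf ζ = n) {χ : MulChar F ℂ}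
    (h : χ (ζ : F) = 1) : ∃ ψ : MulChar F ℂ, ψ ^ n = χ := by
  have hcyc : IsCyclic (MulChar F ℂ) := by
    obtain ⟨e⟩ := MulChar.mulEquiv_units F ℂ
    exact isCyclic_of_surjective e.symm e.symm.surjective
  obtain ⟨κ, hκ⟩ := IsCyclic.exists_generator (α := MulChar F ℂ)
  have hκ' : ∀ u : MulChar F ℂ, ∃ k : ℕ, κ ^ k = u := fun u =>
    mem_powers_iff_mem_zpowers.2 (hκ u)
  obtain ⟨k, rfl⟩ := hκ' χ
  have hz : ζ ^ k = 1 := by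
    by_contra hne
    have hne' : ((ζ ^ k : Fˣ) : F) ≠ 1 := by simpa [← Units.val_pow_eq_pow_val] using hne
    obtain ⟨ψ, hψ⟩ := MulChar.exists_apply_ne_one_of_hasEnoughRootsOfUnity F ℂ hne'
    obtain ⟨j, rfl⟩ := hκ' ψ
    apply hψ
    rw [MulChar.pow_apply_coe] at h
    rw [MulChar.pow_apply_coe, Units.val_pow_eq_pow_val, map_pow, h, one_pow]
  obtain ⟨j, rfl⟩ : n ∣ k := hζ ▸ orderOf_dvd_of_pow_eq_one hz
  exact ⟨κ ^ j, by rw [← pow_mul, mul_comm]⟩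

lemma fibre [Fintype (MulChar F ℂ)] {n : ℕ} (hn : 0 < n) {ζ : Fˣ} (hζ : orderOf ζ = n)
    {χn : MulChar F ℂ} (hχ : orderOf χn = n) (χ : MulChar F ℂ) :
    ∑ l ∈ range n, χ (ζ : F) ^ l = ((univ.filter (fun ψ : MulChar F ℂ => ψ ^ n = χ)).card : ℂ) := by
  have hχn : χn ^ n = 1 := hχ ▸ pow_orderOf_eq_one χn
  have hζn : ζ ^ n = 1 := hζ ▸ pow_orderOf_eq_one ζ
  have hζ' : χ (ζ : F) ^ n = 1 := by
    rw [← map_pow, ← Units.val_pow_eq_pow_val, hζn, Units.val_one, map_one]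
  by_cases h : χ (ζ : F) = 1
  · obtain ⟨ψ, rfl⟩ := is_pow hn hζ h
    have : univ.filter (fun φ : MulChar F ℂ => φ ^ n = ψ ^ n)
        = (range n).image (fun j => ψ * χn ^ j) := by
      ext φ
      simp only [mem_filter, mem_univ, true_and, mem_image, mem_range]
      constructor
      · intro hφ
        obtain ⟨j, hj, hj'⟩ := pow_root hn hχ (ψ := ψ⁻¹ * φ)
          (by rw [mul_pow, hφ, inv_pow, inv_mul_cancel])
        exact ⟨j, hj, by rw [← hj', mul_inv_cancel_left]⟩
      · rintro ⟨j, -, rfl⟩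
        rw [mul_pow, ← pow_mul, mul_comm j, pow_mul, hχn, one_pow, mul_one]
    rw [this, card_image_of_injOn, card_range, h]
    · simp
    · intro a ha b hb hab
      have ha' : a < orderOf χn := by rw [hχ]; simpa using ha
      have hb' : b < orderOf χn := by rw [hχ]; simpa using hb
      exact pow_injOn_Iio_orderOf ha' hb' (mul_left_cancel hab)
  · rw [geom_sum_eq h, hζ', sub_self, zero_div]
    symm
    rw [Nat.cast_eq_zero, card_eq_zero, filter_eq_empty_iff]
    rintro φ - rfl
    apply h
    rw [MulChar.pow_apply_coe, ← map_pow, ← Units.val_pow_eq_pow_val, hζn, Units.val_one, map_one]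

lemma main_sum [Fintype (MulChar F ℂ)] {n : ℕ} (hn : 0 < n) {ζ : Fˣ} (hζ : orderOf ζ = n)
    {χn : MulChar F ℂ} (hχ : orderOf χn = n) (f : MulChar F ℂ → ℂ) :
    ∑ χ, f χ * ∑ l ∈ range n, χ (ζ : F) ^ l = ∑ ψ, f (ψ ^ n) := by
  rw [← sum_fiberwise univ (fun ψ : MulChar F ℂ => ψ ^ n) (fun ψ => f (ψ ^ n))]
  refine sum_congr rfl fun χ _ => ?_
  rw [fibre hn hζ hχ, sum_congr rfl (g := fun _ => f χ)
    (fun ψ hψ => by rw [(mem_filter.1 hψ).2]), sum_const, nsmul_eq_mul, mul_comm]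

end final
end HD

theorem stmt1 {F : Type} [Field F] [Fintype F]
    (θ : AddChar F ℂ) (hθ : θ ≠ 1)
    (n m : ℕ) (hn : 0 < n) (hm : 0 < m) (hq : Fintype.card F ≡ 1 [MOD n])
    (ζ : Fˣ) (hζ : orderOf ζ = n)
    (χn : MulChar F ℂ) (hχn : orderOf χn = n)
    (A B : Fin m → MulChar F ℂ) (lam : F) :
    ∑ l ∈ Finset.range n,
        ffHyp θ (fun i => A i ^ n) (fun i => B i ^ n) ((ζ : F) ^ l * lam)
      = ffHyp θ (fun p : Fin m × Fin n => A p.1 * χn ^ (p.2 : ℕ))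
          (fun p : Fin m × Fin n => B p.1 * χn ^ (p.2 : ℕ)) (lam ^ n) := by
  have hζ' : IsPrimitiveRoot (ζ : F) n := by
    rw [IsPrimitiveRoot.coe_units_iff, ← hζ]
    exact IsPrimitiveRoot.orderOf ζ
  unfold ffHyp
  dsimp only
  letI : Fintype (MulChar F ℂ) := Fintype.ofFinite _
  rw [← Finset.mul_sum, Finset.sum_comm]
  congr 1
  have key := HD.main_sum hn hζ hχn (fun χ =>
    (∏ i, (gaussSum (A i ^ n * χ) θ / gaussSum (A i ^ n) θ) *
        (gaussSum ((B i ^ n * χ)⁻¹) θ / gaussSum ((B i ^ n)⁻¹) θ)) *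
      χ (-1) ^ (Fintype.card (Fin m)) * χ lam)
  refine Eq.trans (Finset.sum_congr rfl fun χ _ => ?_) (key.trans
    (Finset.sum_congr rfl fun ψ _ => ?_))
  · rw [Finset.mul_sum]
    refine Finset.sum_congr rfl fun l _ => ?_
    rw [map_mul, map_pow]
    ring
  · rw [Fintype.prod_prod_type]
    simp only [HD.term_eq hθ hn hζ' hχn]
    rw [MulChar.pow_apply' _ hn.ne', MulChar.pow_apply' _ hn.ne', map_pow, Fintype.card_prod,
      Fintype.card_fin, Fintype.card_fin, ← pow_mul, mul_comm n m]
end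

section
/- Let q be an odd prime power and let A and B be multiplicative characters of F_q^* with A^2 ≠ ε and B^4 ≠ ε. Then _4F_4(A, φA, B, φB; ε, φ, AB̄, φAB̄ | 1)_q = g(B^2) g(Ā^2 B^4) / ( g(Ā^2 B^2) g(B^4) ) + Σ_{R} g(Ā^2) g(R̄ B^2) / ( g(R̄) g(Ā^2 B^2) ), where the sum is over the multiplicative characters R of F_q^* with R^2 = A^2. -/
open scoped Classical in
lemma aux_two_classes {F : Type} [Field F] [Fintype F]
    (R : MulChar F ℂ) (hR : R ^ 2 = 1) (hR1 : R ≠ 1) (s : F) :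
    R s = ((quadraticChar F s : ℤ) : ℂ) := by
  have hsq : ∀ x : F, x ≠ 0 → R x * R x = 1 := by
    intro x hx
    have h := congrArg (fun χ : MulChar F ℂ => χ x) hR
    simp only [MulChar.pow_apply' _ two_ne_zero] at h
    rw [MulChar.one_apply (isUnit_iff_ne_zero.mpr hx)] at h
    rw [← h, sq]
  have hsq' : ∀ x : F, x ≠ 0 → IsSquare x → R x = 1 := by
    rintro x hx ⟨y, rfl⟩
    rw [map_mul]
    exact hsq y (by rintro rfl; simp at hx)
  by_cases hs : s = 0
  · subst hs; simp [MulChar.map_zero]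
  by_cases h1 : IsSquare s
  · rw [hsq' s hs h1, (quadraticChar_one_iff_isSquare hs).mpr h1]; simp
  · obtain ⟨n, hn⟩ := MulChar.ne_one_iff.mp hR1
    have hn0 : (n : F) ≠ 0 := n.ne_zero
    have hnm : R n = -1 := by
      rcases mul_self_eq_one_iff.mp (hsq n hn0) with h | h
      · exact absurd h hn
      · exact h
    have hnn : ¬ IsSquare (n : F) := fun h => hn (hsq' n hn0 h)
    have h2 : IsSquare ((n : F) * s) := by
      rw [← quadraticChar_one_iff_isSquare (mul_ne_zero hn0 hs), map_mul,
        quadraticChar_neg_one_iff_not_isSquare.mpr hnn,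
        quadraticChar_neg_one_iff_not_isSquare.mpr h1]
      norm_num
    have h3 := hsq' _ (mul_ne_zero hn0 hs) h2
    rw [map_mul, hnm] at h3
    rw [quadraticChar_neg_one_iff_not_isSquare.mpr h1]
    push_cast
    linear_combination -h3

lemma aux_sq_eq_one {F : Type} [Field F] [Fintype F]
    (φ : MulChar F ℂ) (hφ2 : φ ^ 2 = 1) (hφ1 : φ ≠ 1)
    (R : MulChar F ℂ) (hR : R ^ 2 = 1) : R = 1 ∨ R = φ := by
  classical
  by_cases h : R = 1
  · exact Or.inl h
  · right
    apply MulChar.ext'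
    intro s
    rw [aux_two_classes R hR h s, aux_two_classes φ hφ2 hφ1 s]

lemma aux_sq_sum {F : Type} [Field F] [Fintype F] (hF : ringChar F ≠ 2)
    (φ : MulChar F ℂ) (hφ2 : φ ^ 2 = 1) (hφ1 : φ ≠ 1) (f : F → ℂ) :
    ∑ t : F, f (t ^ 2) = ∑ s : F, (1 + φ s) * f s := by
  classical
  rw [← Finset.sum_fiberwise (s := Finset.univ) (g := fun t : F => t ^ 2)]
  refine Finset.sum_congr rfl fun s _ => ?_
  have h := quadraticChar_card_sqrts hF s
  have h2 : ∑ t ∈ Finset.univ.filter (fun t : F => t ^ 2 = s), f (t ^ 2)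
      = ∑ t ∈ Finset.univ.filter (fun t : F => t ^ 2 = s), f s := by
    refine Finset.sum_congr rfl fun t ht => ?_
    rw [(Finset.mem_filter.mp ht).2]
  rw [h2, Finset.sum_const, nsmul_eq_mul, aux_two_classes φ hφ2 hφ1 s]
  congr 1
  have h3 : ((Finset.univ.filter (fun t : F => t ^ 2 = s)).card : ℤ) = quadraticChar F s + 1 := by
    rw [← h]; congr 2; ext; simp
  have h4 := congrArg (fun z : ℤ => (z : ℂ)) h3
  push_cast at h4
  rw [h4, add_comm]

/-- Product of two Gauss sums as a Gauss sum times a Jacobi-type sum. -/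
lemma aux_T {F : Type} [Field F] [Fintype F] (θ : AddChar F ℂ)
    (α β : MulChar F ℂ) (h : α * β ≠ 1) :
    gaussSum α θ * gaussSum β θ
      = gaussSum (α * β) θ * ∑ t : F, α t * (α * β)⁻¹ (1 + t) := by
  classical
  have h1 : ∀ w : F, ∑ x : F, (α x * θ x) * (β w * θ w)
      = ∑ t : F, α t * ((α * β) w * θ (w * (1 + t))) := by
    intro w
    by_cases hw : w = 0
    · subst hw; simp [MulChar.map_zero]
    · rw [← Equiv.sum_comp (Equiv.mulRight₀ w hw)]
      refine Finset.sum_congr rfl fun t _ => ?_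
      simp only [Equiv.mulRight₀_apply, map_mul, MulChar.mul_apply]
      rw [show w * (1 + t) = t * w + w by ring, AddChar.map_add_eq_mul]
      ring
  have h2 : ∀ t : F, ∑ w : F, (α * β) w * θ (w * (1 + t))
      = gaussSum (α * β) θ * (α * β)⁻¹ (1 + t) := by
    intro t
    by_cases ht : 1 + t = 0
    · rw [ht]
      simp only [mul_zero, AddChar.map_zero_eq_one, mul_one]
      rw [MulChar.sum_eq_zero_of_ne_one h, MulChar.map_zero, mul_zero]
    · have := gaussSum_mulShift_eq (α * β) θ (Units.mk0 _ ht)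
      rw [Units.val_mk0] at this
      rw [mul_comm (gaussSum _ _), ← this, gaussSum]
      refine Finset.sum_congr rfl fun w _ => ?_
      rw [AddChar.mulShift_apply, mul_comm w]
  rw [gaussSum, gaussSum, Finset.sum_mul_sum, Finset.sum_comm]
  simp_rw [h1]
  rw [Finset.sum_comm, Finset.mul_sum]
  refine Finset.sum_congr rfl fun t _ => ?_
  rw [← Finset.mul_sum, h2]
  ring

lemma aux_gne {F : Type} [Field F] [Fintype F] (θ : AddChar F ℂ) (hθ : θ ≠ 1)
    (χ : MulChar F ℂ) : gaussSum χ θ ≠ 0 := by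
  by_cases h : χ = 1
  · rw [h, gaussSum_one_left hθ]; norm_num
  · exact gaussSum_ne_zero_of_nontrivial (by simp) h (AddChar.IsPrimitive.of_ne_one hθ)

lemma aux_refl {F : Type} [Field F] [Fintype F] (θ : AddChar F ℂ) (hθ : θ ≠ 1)
    (χ : MulChar F ℂ) (h : χ ≠ 1) :
    gaussSum χ θ * gaussSum χ⁻¹ θ = χ (-1) * Fintype.card F := by
  have h1 := gaussSum_mul_gaussSum_eq_card h (AddChar.IsPrimitive.of_ne_one hθ)
  have h2 := mul_gaussSum_inv_eq_gaussSum χ⁻¹ θ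
  rw [← h2, ← h1]
  have : χ⁻¹ (-1) = χ (-1) := by
    rw [MulChar.inv_apply']; congr 1; rw [inv_neg, inv_one]
  rw [this]; ring

/-- Hasse–Davenport product formula for the quadratic character. -/
lemma aux_HD {F : Type} [Field F] [Fintype F] (hF : ringChar F ≠ 2) (θ : AddChar F ℂ) (hθ : θ ≠ 1)
    (φ : MulChar F ℂ) (hφ2 : φ ^ 2 = 1) (hφ1 : φ ≠ 1) (A : MulChar F ℂ) :
    A 4 * (gaussSum A θ * gaussSum (φ * A) θ) = gaussSum (A ^ 2) θ * gaussSum φ θ := by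
  have h2 : (2 : F) ≠ 0 := Ring.two_ne_zero hF
  by_cases hA : A ^ 2 = 1
  · rcases aux_sq_eq_one φ hφ2 hφ1 A hA with rfl | rfl
    · rw [MulChar.one_apply (isUnit_iff_ne_zero.mpr (by
        rw [show (4 : F) = 2 * 2 by norm_num]; exact mul_ne_zero h2 h2))]
      simp
    · rw [show (4 : F) = 2 ^ 2 by norm_num, map_pow, ← MulChar.pow_apply' _ two_ne_zero, hφ2,
        MulChar.one_apply (isUnit_iff_ne_zero.mpr h2), ← sq, hφ2]
      ring
  · have hA1 : A ≠ 1 := by rintro rfl; simp at hA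
    have hAφ : A * φ ≠ 1 := by
      intro h
      apply hA
      have : (A * φ) ^ 2 = 1 := by rw [h, one_pow]
      rwa [mul_pow, hφ2, mul_one] at this
    have j1 := jacobiSum_mul_nontrivial (χ := A) (φ := A) (by rwa [← sq]) θ
    have j2 := jacobiSum_mul_nontrivial hAφ θ
    have j3 : A 4 * jacobiSum A A = jacobiSum A φ := by
      have e1 : A 4 * jacobiSum A A = ∑ u : F, A (1 - u ^ 2) := by
        have e : Function.Bijective (fun x : F => 2 * x - 1) :=
          ((Equiv.mulLeft₀ (2 : F) h2).trans (Equiv.subRight 1)).bijective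
        rw [jacobiSum, Finset.mul_sum]
        refine Fintype.sum_bijective _ e _ _ fun x => ?_
        rw [← map_mul, ← map_mul]
        congr 1; ring
      rw [e1, aux_sq_sum hF φ hφ2 hφ1 (fun s => A (1 - s))]
      simp_rw [add_mul, one_mul]
      rw [Finset.sum_add_distrib, jacobiSum_comm, jacobiSum]
      have : ∑ s : F, A (1 - s) = 0 := by
        rw [← MulChar.sum_eq_zero_of_ne_one hA1]
        exact (Equiv.subLeft (1 : F)).sum_comp (fun s => A s)
      rw [this, zero_add]
    rw [← j3, mul_comm A φ] at j2
    rw [← sq] at j1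
    apply mul_left_cancel₀ (aux_gne θ hθ A)
    linear_combination gaussSum (A^2) θ * j2 - A 4 * gaussSum (φ * A) θ * j1

lemma aux_orth {F : Type} [Field F] [Fintype F] [Fintype (MulChar F ℂ)] [DecidableEq F]
    (a : F) :
    ∑ χ : MulChar F ℂ, χ a = if a = 1 then ((Fintype.card F : ℂ) - 1) else 0 := by
  split_ifs with ha
  · subst ha
    simp only [map_one, Finset.sum_const, nsmul_eq_mul, mul_one, Finset.card_univ]
    rw [← Nat.card_eq_fintype_card, MulChar.card_eq_card_units_of_hasEnoughRootsOfUnity,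
      Nat.card_eq_fintype_card, Fintype.card_units, Nat.cast_sub Fintype.card_pos]
    simp
  · obtain ⟨χ, hχ⟩ := MulChar.exists_apply_ne_one_of_hasEnoughRootsOfUnity F ℂ ha
    refine eq_zero_of_mul_eq_self_left hχ ?_
    simp only [Finset.mul_sum, ← MulChar.mul_apply]
    exact Fintype.sum_bijective _ (Group.mulLeft_bijective χ) _ _ fun χ' ↦ rfl

lemma aux_orth2 {F : Type} [Field F] [Fintype F] [Fintype (MulChar F ℂ)]
    (hF : ringChar F ≠ 2) (t : F) (ht : t ≠ 0) (f : F → ℂ) :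
    ∑ r : F, f r * ∑ χ : MulChar F ℂ, (χ ^ 2) t * ((χ ^ 2)⁻¹) r
      = ((Fintype.card F : ℂ) - 1) * (f t + f (-t)) := by
  classical
  have h2 : (2 : F) ≠ 0 := Ring.two_ne_zero hF
  have hne : t ≠ -t := by
    intro h
    have : 2 * t = 0 := by linear_combination h
    exact (mul_ne_zero h2 ht) this
  have key : ∀ r : F, f r * ∑ χ : MulChar F ℂ, (χ ^ 2) t * ((χ ^ 2)⁻¹) r
      = (if r = t then ((Fintype.card F : ℂ) - 1) * f r else 0)
        + (if r = -t then ((Fintype.card F : ℂ) - 1) * f r else 0) := by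
    intro r
    have e : ∀ χ : MulChar F ℂ, (χ ^ 2) t * ((χ ^ 2)⁻¹) r = χ ((t * r⁻¹) ^ 2) := by
      intro χ
      rw [MulChar.inv_apply', ← map_mul, MulChar.pow_apply' _ two_ne_zero, map_pow]
    simp_rw [e]
    rw [aux_orth]
    have hiff : (t * r⁻¹) ^ 2 = 1 ↔ (r = t ∨ r = -t) := by
      by_cases hr : r = 0
      · subst hr
        simp [ht, ht.symm]
      · rw [mul_pow, inv_pow, ← div_eq_mul_inv, div_eq_one_iff_eq (pow_ne_zero 2 hr),
          eq_comm, sq_eq_sq_iff_eq_or_eq_neg]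
    simp only [hiff]
    by_cases h1 : r = t
    · subst h1; simp [hne]; ring
    · by_cases h3 : r = -t
      · simp [h3, hne.symm]; ring
      · simp [h1, h3]
  rw [Finset.sum_congr rfl fun r _ => key r, Finset.sum_add_distrib]
  simp
  ring

/-- The core character-sum evaluation. -/
lemma aux_core {F : Type} [Field F] [Fintype F] [Fintype (MulChar F ℂ)]
    (hF : ringChar F ≠ 2) (θ : AddChar F ℂ)
    (φ : MulChar F ℂ) (hφ2 : φ ^ 2 = 1) (hφ1 : φ ≠ 1)
    (A b : MulChar F ℂ) (hb : b ≠ 1) (hb2 : b ^ 2 ≠ 1) :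
    gaussSum (b ^ 2) θ * ∑ χ : MulChar F ℂ, gaussSum (A ^ 2 * χ ^ 2) θ * gaussSum (b * χ ^ 2) θ *
      gaussSum ((χ ^ 2)⁻¹) θ * gaussSum ((A ^ 2)⁻¹ * b * (χ ^ 2)⁻¹) θ
    = ((Fintype.card F : ℂ) - 1) * gaussSum b θ *
      (gaussSum b θ * (gaussSum (A ^ 2) θ * gaussSum ((A ^ 2)⁻¹ * b ^ 2) θ)
       + gaussSum (b ^ 2) θ * (A (-1) * (gaussSum A θ * gaussSum (A⁻¹ * b) θ)
         + (φ * A) (-1) * (gaussSum (φ * A) θ * gaussSum ((φ * A)⁻¹ * b) θ))) := by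
  classical
  have T : ∀ R c : MulChar F ℂ, c ≠ 1 → gaussSum R θ * gaussSum (R⁻¹ * c) θ
      = gaussSum c θ * ∑ t : F, R t * c⁻¹ (1 + t) := by
    intro R c hc
    have h := aux_T θ R (R⁻¹ * c) (by rwa [mul_inv_cancel_left])
    rwa [mul_inv_cancel_left] at h
  have Tm : ∀ R : MulChar F ℂ, R (-1) * ∑ t : F, R t * b⁻¹ (1 + t)
      = ∑ t : F, R t * b⁻¹ (1 - t) := by
    intro R
    rw [← Equiv.sum_comp (Equiv.neg F), Finset.mul_sum]
    refine Finset.sum_congr rfl fun t _ => ?_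
    simp only [Equiv.neg_apply]
    rw [← mul_assoc, ← map_mul]
    congr 2 <;> ring
  have e1 : ∀ χ : MulChar F ℂ, gaussSum (A ^ 2 * χ ^ 2) θ * gaussSum (b * χ ^ 2) θ *
      gaussSum ((χ ^ 2)⁻¹) θ * gaussSum ((A ^ 2)⁻¹ * b * (χ ^ 2)⁻¹) θ
      = gaussSum b θ ^ 2 * ∑ t : F, ∑ r : F, (A ^ 2) t * b⁻¹ (1 + t) * b⁻¹ (1 + r)
        * ((χ ^ 2) t * ((χ ^ 2)⁻¹) r) := by
    intro χ
    have h1 := T (A ^ 2 * χ ^ 2) b hb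
    have h2 := T ((χ ^ 2)⁻¹) b hb
    rw [show (A ^ 2)⁻¹ * b * (χ ^ 2)⁻¹ = (A ^ 2 * χ ^ 2)⁻¹ * b by rw [mul_inv]; exact mul_right_comm _ _ _,
      show b * χ ^ 2 = ((χ ^ 2)⁻¹)⁻¹ * b by rw [inv_inv, mul_comm]]
    have h3 : (∑ t : F, (A ^ 2 * χ ^ 2) t * b⁻¹ (1 + t)) * (∑ t : F, (χ ^ 2)⁻¹ t * b⁻¹ (1 + t))
       = ∑ t : F, ∑ r : F, (A ^ 2) t * b⁻¹ (1 + t) * b⁻¹ (1 + r)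
        * ((χ ^ 2) t * ((χ ^ 2)⁻¹) r) := by
      rw [Finset.sum_mul_sum]
      refine Finset.sum_congr rfl fun t _ => Finset.sum_congr rfl fun r _ => ?_
      rw [MulChar.mul_apply]; ring
    rw [← h3]
    generalize gaussSum (A ^ 2 * χ ^ 2) θ = g1 at *
    generalize gaussSum ((χ ^ 2)⁻¹) θ = g2 at *
    linear_combination g2 * gaussSum (((χ ^ 2)⁻¹)⁻¹ * b) θ * h1 +
      gaussSum b θ * (∑ t : F, (A ^ 2 * χ ^ 2) t * b⁻¹ (1 + t)) * h2
  have e2 : ∑ χ : MulChar F ℂ, gaussSum (A ^ 2 * χ ^ 2) θ * gaussSum (b * χ ^ 2) θ *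
      gaussSum ((χ ^ 2)⁻¹) θ * gaussSum ((A ^ 2)⁻¹ * b * (χ ^ 2)⁻¹) θ
      = ((Fintype.card F : ℂ) - 1) * gaussSum b θ ^ 2 *
        ((∑ t : F, (A ^ 2) t * (b ^ 2)⁻¹ (1 + t)) + ∑ t : F, (A ^ 2) t * b⁻¹ (1 - t ^ 2)) := by
    rw [Finset.sum_congr rfl fun χ _ => e1 χ, ← Finset.mul_sum, Finset.sum_comm,
      ← Finset.sum_add_distrib, mul_comm ((Fintype.card F : ℂ) - 1), mul_assoc]
    congr 1
    rw [Finset.mul_sum]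
    refine Finset.sum_congr rfl fun t _ => ?_
    by_cases ht : t = 0
    · subst ht; simp [MulChar.map_zero]
    rw [Finset.sum_comm]
    simp_rw [← Finset.mul_sum]
    rw [aux_orth2 hF t ht (fun r => (A ^ 2) t * b⁻¹ (1 + t) * b⁻¹ (1 + r))]
    congr 1
    rw [show (1 : F) - t ^ 2 = (1 + t) * (1 + -t) by ring, map_mul, ← inv_pow,
      MulChar.pow_apply' _ two_ne_zero (a := 1 + t)]
    ring
  have e3 : ∑ t : F, (A ^ 2) t * b⁻¹ (1 - t ^ 2)
      = (∑ t : F, A t * b⁻¹ (1 - t)) + ∑ t : F, (φ * A) t * b⁻¹ (1 - t) := by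
    have := aux_sq_sum hF φ hφ2 hφ1 (fun s => A s * b⁻¹ (1 - s))
    simp only [map_pow] at this
    simp_rw [MulChar.pow_apply' A two_ne_zero]
    rw [this, ← Finset.sum_add_distrib]
    refine Finset.sum_congr rfl fun t _ => ?_
    rw [MulChar.mul_apply]; ring
  rw [e2, e3, ← Tm, ← Tm, T A b hb, T (φ * A) b hb, T (A ^ 2) (b ^ 2) hb2]
  ring

/-- Ratio form of the Hasse–Davenport formula. -/
lemma aux_ratio {F : Type} [Field F] [Fintype F] (hF : ringChar F ≠ 2) (θ : AddChar F ℂ)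
    (hθ : θ ≠ 1) (φ : MulChar F ℂ) (hφ2 : φ ^ 2 = 1) (hφ1 : φ ≠ 1) (A χ : MulChar F ℂ) :
    χ 4 * ((gaussSum (A * χ) θ / gaussSum A θ) * (gaussSum (φ * A * χ) θ / gaussSum (φ * A) θ))
      = gaussSum (A ^ 2 * χ ^ 2) θ / gaussSum (A ^ 2) θ := by
  have h1 := aux_HD hF θ hθ φ hφ2 hφ1 (A * χ)
  have h2 := aux_HD hF θ hθ φ hφ2 hφ1 A
  rw [MulChar.mul_apply, ← mul_assoc φ, mul_pow] at h1
  have n0 := aux_gne θ hθ A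
  have n1 := aux_gne θ hθ (φ * A)
  have n2 := aux_gne θ hθ (A ^ 2)
  have n3 := aux_gne θ hθ φ
  have n4 : A 4 ≠ 0 := by
    intro h
    rw [h, zero_mul] at h2
    exact mul_ne_zero n2 n3 h2.symm
  rw [div_mul_div_comm, mul_div_assoc', div_eq_div_iff (mul_ne_zero n0 n1) n2]
  apply mul_left_cancel₀ (mul_ne_zero n3 n4)
  linear_combination gaussSum φ θ * gaussSum (A ^ 2) θ * h1 -
    gaussSum φ θ * gaussSum (A ^ 2 * χ ^ 2) θ * h2

open scoped Classical in
theorem stmt9 {F : Type} [Field F] [Fintype F] (hodd : Odd (Fintype.card F))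
    (θ : AddChar F ℂ) (hθ : θ ≠ 1)
    (φ : MulChar F ℂ) (hφ : orderOf φ = 2)
    (A B : MulChar F ℂ) (hA : A ^ 2 ≠ 1) (hB : B ^ 4 ≠ 1) :
    letI : Fintype (MulChar F ℂ) := Fintype.ofFinite _
    ffHyp θ ![A, φ * A, B, φ * B] ![1, φ, A * B⁻¹, φ * A * B⁻¹] 1
      = gaussSum (B ^ 2) θ * gaussSum (A⁻¹ ^ 2 * B ^ 4) θ /
          (gaussSum (A⁻¹ ^ 2 * B ^ 2) θ * gaussSum (B ^ 4) θ)
        + ∑ R ∈ Finset.univ.filter (fun R : MulChar F ℂ => R ^ 2 = A ^ 2),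
            gaussSum (A⁻¹ ^ 2) θ * gaussSum (R⁻¹ * B ^ 2) θ /
              (gaussSum R⁻¹ θ * gaussSum (A⁻¹ ^ 2 * B ^ 2) θ) := by
  letI : Fintype (MulChar F ℂ) := Fintype.ofFinite _
  have hF : ringChar F ≠ 2 := by
    intro h
    have := FiniteField.even_card_of_char_two h
    rw [Nat.odd_iff] at hodd
    omega
  have hφ2 : φ ^ 2 = 1 := by rw [← hφ]; exact pow_orderOf_eq_one φ
  have hφ1 : φ ≠ 1 := by rintro rfl; simp at hφ
  have hφi : φ⁻¹ = φ := inv_eq_of_mul_eq_one_left (by rw [← sq, hφ2])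
  have g1 : gaussSum (1 : MulChar F ℂ) θ = -1 := gaussSum_one_left hθ
  have hb : B ^ 2 ≠ 1 := by
    intro h
    apply hB
    rw [show 4 = 2 * 2 by norm_num, pow_mul, h, one_pow]
  have hbb : (B ^ 2) ^ 2 = B ^ 4 := by rw [← pow_mul]
  have hb2 : (B ^ 2) ^ 2 ≠ 1 := by rwa [hbb]
  have core := aux_core hF θ φ hφ2 hφ1 A (B ^ 2) hb hb2
  -- the summand
  have summand : ∀ χ : MulChar F ℂ,
      (∏ i, (gaussSum ((![A, φ * A, B, φ * B] : Fin 4 → MulChar F ℂ) i * χ) θ /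
          gaussSum ((![A, φ * A, B, φ * B] : Fin 4 → MulChar F ℂ) i) θ) *
        (gaussSum (((![1, φ, A * B⁻¹, φ * A * B⁻¹] : Fin 4 → MulChar F ℂ) i * χ)⁻¹) θ /
          gaussSum (((![1, φ, A * B⁻¹, φ * A * B⁻¹] : Fin 4 → MulChar F ℂ) i)⁻¹) θ)) *
        χ (-1) ^ (Fintype.card (Fin 4)) * χ 1
      = -(gaussSum (A ^ 2 * χ ^ 2) θ * gaussSum (B ^ 2 * χ ^ 2) θ *
      gaussSum ((χ ^ 2)⁻¹) θ * gaussSum ((A ^ 2)⁻¹ * B ^ 2 * (χ ^ 2)⁻¹) θ) /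
        (gaussSum (A ^ 2) θ * gaussSum (B ^ 2) θ * gaussSum ((A ^ 2)⁻¹ * B ^ 2) θ) := by
    intro χ
    have r1 := aux_ratio hF θ hθ φ hφ2 hφ1 A χ
    have r2 := aux_ratio hF θ hθ φ hφ2 hφ1 B χ
    have r3 := aux_ratio hF θ hθ φ hφ2 hφ1 1 χ⁻¹
    have r4 := aux_ratio hF θ hθ φ hφ2 hφ1 (A⁻¹ * B) χ⁻¹
    have hm : χ (-1) ^ 4 = 1 := by
      rw [← map_pow]; norm_num
    have h4 : χ 4 * χ⁻¹ 4 = 1 := by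
      rw [← MulChar.mul_apply, mul_inv_cancel]
      exact MulChar.one_apply (isUnit_iff_ne_zero.mpr (by
        rw [show (4 : F) = 2 * 2 by norm_num]
        exact mul_ne_zero (Ring.two_ne_zero hF) (Ring.two_ne_zero hF)))
    have i1 : (φ * χ)⁻¹ = φ * 1 * χ⁻¹ := by rw [mul_inv, hφi, mul_one]
    have i2 : (A * B⁻¹ * χ)⁻¹ = A⁻¹ * B * χ⁻¹ := by rw [mul_inv, mul_inv, inv_inv]
    have i3 : (φ * A * B⁻¹ * χ)⁻¹ = φ * (A⁻¹ * B) * χ⁻¹ := by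
      rw [mul_inv, mul_inv, mul_inv, inv_inv, hφi, mul_assoc φ]
    have i4 : (A * B⁻¹)⁻¹ = A⁻¹ * B := by rw [mul_inv, inv_inv]
    have i5 : (φ * A * B⁻¹)⁻¹ = φ * (A⁻¹ * B) := by
      rw [mul_inv, mul_inv, inv_inv, hφi, mul_assoc φ]
    have i6 : φ⁻¹ = φ * 1 := by rw [hφi, mul_one]
    have i7 : (1 * χ)⁻¹ = 1 * χ⁻¹ := by rw [one_mul, one_mul]
    rw [mul_pow, inv_pow, inv_pow] at r4
    rw [one_pow, one_mul (χ⁻¹ ^ 2), inv_pow, g1] at r3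
    rw [Fin.prod_univ_four]
    simp only [Fintype.card_fin, map_one, mul_one, hm, Matrix.cons_val]
    rw [i1, i2, i3, i4, i5, i6, i7, inv_one, g1]
    have prod : ∀ a b c d x y z w u v : ℂ, u * v = 1 →
        (a * z) * (b * w) * (c * x) * (d * y) = (u * (a * b)) * (u * (c * d)) *
          (v * (z * w)) * (v * (x * y)) := by
      intro a b c d x y z w u v h
      linear_combination (-(u * v + 1) * a * b * c * d * x * y * z * w) * h
    rw [prod _ _ _ _ _ _ _ _ _ _ h4, r1, r2, r3, r4]
    have n1 := aux_gne θ hθ (A ^ 2)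
    have n2 := aux_gne θ hθ (B ^ 2)
    have n3 := aux_gne θ hθ ((A ^ 2)⁻¹ * B ^ 2)
    field_simp
  have hq : (Fintype.card F : ℂ) - 1 ≠ 0 := by
    have h1 : (1 : ℕ) < Fintype.card F := Fintype.one_lt_card
    rw [sub_ne_zero]
    exact_mod_cast h1.ne'
  have hset : Finset.univ.filter (fun R : MulChar F ℂ => R ^ 2 = A ^ 2) = {A, φ * A} := by
    ext R
    simp only [Finset.mem_filter, Finset.mem_univ, true_and, Finset.mem_insert,
      Finset.mem_singleton]
    constructor
    · intro h
      rcases aux_sq_eq_one φ hφ2 hφ1 (R * A⁻¹)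
        (by rw [mul_pow, h, inv_pow, mul_inv_cancel]) with h' | h'
      · left; exact mul_inv_eq_one.mp h'
      · right; exact mul_inv_eq_iff_eq_mul.mp h'
    · rintro (rfl | rfl)
      · rfl
      · rw [mul_pow, hφ2, one_mul]
  have hne : A ≠ φ * A := by
    intro h
    exact hφ1 (by simpa using h)
  have hcard : gaussSum (A ^ 2) θ * gaussSum ((A ^ 2)⁻¹) θ = Fintype.card F := by
    rw [aux_refl θ hθ _ hA, MulChar.pow_apply' _ two_ne_zero, ← map_pow]
    simp
  -- reflection for the square roots of `A ^ 2`
  have refl : ∀ R : MulChar F ℂ, R ^ 2 = A ^ 2 →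
      gaussSum ((A ^ 2)⁻¹) θ / gaussSum R⁻¹ θ = R (-1) * gaussSum R θ / gaussSum (A ^ 2) θ := by
    intro R hR
    have hR1 : R ≠ 1 := by
      rintro rfl
      exact hA (by rw [← hR, one_pow])
    have h := aux_refl θ hθ R hR1
    have hm : R (-1) * R (-1) = 1 := by rw [← map_mul]; simp
    rw [div_eq_div_iff (aux_gne θ hθ _) (aux_gne θ hθ _)]
    linear_combination hcard - R (-1) * h - (Fintype.card F : ℂ) * hm
  have rA := refl A rfl
  have rP := refl (φ * A) (by rw [mul_pow, hφ2, one_mul])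
  rw [hset, Finset.sum_pair hne, ffHyp, Finset.sum_congr rfl fun χ _ => summand χ,
    ← Finset.sum_div, Finset.sum_neg_distrib, inv_pow, ← hbb,
    mul_div_mul_comm (gaussSum ((A ^ 2)⁻¹) θ) _ (gaussSum A⁻¹ θ), rA,
    mul_div_mul_comm (gaussSum ((A ^ 2)⁻¹) θ), rP]
  have n1 := aux_gne θ hθ (A ^ 2)
  have n2 := aux_gne θ hθ (B ^ 2)
  have n3 := aux_gne θ hθ ((A ^ 2)⁻¹ * B ^ 2)
  have n4 := aux_gne θ hθ ((B ^ 2) ^ 2)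
  rw [mul_comm (gaussSum ((B ^ 2) ^ 2) θ), ← eq_div_iff n4] at core
  rw [core]
  generalize gaussSum (A ^ 2) θ = x1 at *
  generalize gaussSum (B ^ 2) θ = x2 at *
  generalize gaussSum ((A ^ 2)⁻¹ * B ^ 2) θ = x3 at *
  generalize gaussSum ((B ^ 2) ^ 2) θ = x4 at *
  generalize gaussSum ((A ^ 2)⁻¹ * (B ^ 2) ^ 2) θ = x5 at *
  generalize gaussSum (A⁻¹ * B ^ 2) θ = x6 at *
  generalize gaussSum ((φ * A)⁻¹ * B ^ 2) θ = x7 at *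
  field_simp
end

section
/- Let q be a prime power with q ≡ 1 (mod 4), let χ_4 be a multiplicative character of F_q^* of order 4, and let A be a multiplicative character of F_q^* with A^8 ≠ ε. Then _6F_6(χ_4, χ̄_4, χ_4 A, χ̄_4 A, χ_4 Ā, χ̄_4 Ā; ε, φ, Ā, φĀ, A, φA | 1)_q = 1 + Σ_{R: R^2 = φ} g(R̄ φ A^2) g(R̄ φ Ā^2) / g(R̄)^2 + E, where E = Σ_{S: S^2 = χ_4} g(S A) g(χ_4 S A) / ( g(φ S A) g(χ̄_4 S A) ) if q ≡ 1 (mod 8), and E = 0 otherwise; here the sums are over multiplicative characters R with R^2 = φ and S with S^2 = χ_4, respectively. -/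
section helpers
set_option linter.unusedSectionVars false
variable {F : Type} [Field F] [Fintype F]

theorem hh_phi_eq {φ : MulChar F ℂ} (hs : ∀ x : F, x ≠ 0 → φ (x^2) = 1)
    (r : F) (hr : r ≠ 0) {P Q : F} (h : P = Q * r^2) : φ P = φ Q := by
  rw [h, map_mul, hs r hr, mul_one]

theorem hh_phi_mul_self {φ : MulChar F ℂ} (hs : ∀ x : F, x ≠ 0 → φ (x^2) = 1)
    (x : F) (hx : x ≠ 0) : φ x * φ x = 1 := by
  rw [← map_mul, ← sq, hs x hx]

theorem hh_phi_inv {φ : MulChar F ℂ} (hs : ∀ x : F, x ≠ 0 → φ (x^2) = 1)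
    (x : F) : φ x⁻¹ = φ x := by
  by_cases hx : x = 0
  · simp [hx]
  · exact hh_phi_eq hs x⁻¹ (inv_ne_zero hx) (by field_simp)

/-- any nontrivial character of square one counts square roots -/
theorem hh_quad {ψ : MulChar F ℂ} (h2 : ringChar F ≠ 2) (hψ : ψ ^ 2 = 1) (hψ1 : ψ ≠ 1) [DecidableEq F] :
    ψ = (quadraticChar F).ringHomComp (Int.castRingHom ℂ) := by
  have hs : ∀ x : F, x ≠ 0 → ψ (x^2) = 1 := by
    intro x hx
    rw [map_pow, ← MulChar.pow_apply' _ two_ne_zero, hψ, MulChar.one_apply (isUnit_iff_ne_zero.2 hx)]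
  have hpm : ∀ x : F, x ≠ 0 → ψ x = 1 ∨ ψ x = -1 := by
    intro x hx
    have := hs x hx
    rw [map_pow] at this
    exact sq_eq_one_iff.1 this
  obtain ⟨a, ha⟩ := MulChar.ne_one_iff.1 hψ1
  have hsq : ∀ x : F, x ≠ 0 → IsSquare x → ψ x = 1 := by
    rintro x hx ⟨y, rfl⟩
    rw [← sq]; exact hs y (by rintro rfl; simp at hx)
  ext u
  have hu := u.ne_zero
  simp only [MulChar.ringHomComp_apply]
  by_cases hq : IsSquare (u : F)
  · rw [hsq _ hu hq, (quadraticChar_one_iff_isSquare hu).2 hq]; simp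
  · have hq' := quadraticChar_neg_one_iff_not_isSquare.2 hq
    have haq : ¬ IsSquare (a : F) := fun h => ha (hsq _ a.ne_zero h)
    have haq' := quadraticChar_neg_one_iff_not_isSquare.2 haq
    have hau : IsSquare ((a : F) * u) := by
      rw [← quadraticChar_one_iff_isSquare (mul_ne_zero a.ne_zero hu), map_mul, hq', haq']; norm_num
    have h1 := hsq _ (mul_ne_zero a.ne_zero hu) hau
    have h3 := (hpm _ a.ne_zero).resolve_left ha
    rw [map_mul, h3] at h1
    rw [hq']
    push_cast
    simp
    linear_combination -h1

theorem hh_count {φ : MulChar F ℂ} [DecidableEq F] (h2 : ringChar F ≠ 2)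
    (hφ : φ = (quadraticChar F).ringHomComp (Int.castRingHom ℂ)) (a : F) :
    ∑ y : F, (if y ^ 2 = a then (1:ℂ) else 0) = 1 + φ a := by
  have := quadraticChar_card_sqrts h2 a
  have h3 : ((Finset.univ.filter (fun y : F => y^2 = a)).card : ℤ) = quadraticChar F a + 1 := by
    rw [← this]; congr 2; ext; simp
  rw [Finset.sum_ite, Finset.sum_const_zero, add_zero, Finset.sum_const, nsmul_eq_mul, mul_one, hφ,
    MulChar.ringHomComp_apply]
  have h4 : (((Finset.univ.filter (fun y : F => y^2 = a)).card : ℤ) : ℂ) = ((quadraticChar F a + 1 : ℤ) : ℂ) := by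
    rw [h3]
  push_cast at h4
  rw [h4]; simp [add_comm]

theorem hh_sum_sq [DecidableEq F] {φ : MulChar F ℂ}
    (hc : ∀ a : F, ∑ y : F, (if y ^ 2 = a then (1:ℂ) else 0) = 1 + φ a) (f : F → ℂ) :
    ∑ y : F, f (y^2) = ∑ u : F, (1 + φ u) * f u := by
  simp_rw [← hc, Finset.sum_mul]
  rw [Finset.sum_comm]
  refine Finset.sum_congr rfl fun y _ => ?_
  simp

/-- sums over `s n + 1/n` -/
theorem hh_sum_T [DecidableEq F] {φ : MulChar F ℂ} (h2 : (2:F) ≠ 0)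
    (hc : ∀ a : F, ∑ y : F, (if y ^ 2 = a then (1:ℂ) else 0) = 1 + φ a) (s : F) (hs : s ≠ 0) (f : F → ℂ) :
    ∑ n : F, (if n = 0 then 0 else f (s * n + n⁻¹)) = ∑ T : F, (1 + φ (T^2 - 4*s)) * f T := by
  simp_rw [← hc, Finset.sum_mul]
  rw [← Finset.sum_product']
  simp only [ite_mul, one_mul, zero_mul]
  rw [← Finset.sum_filter]
  have : ∑ n : F, (if n = 0 then 0 else f (s * n + n⁻¹)) =
     ∑ n ∈ Finset.univ.filter (fun n : F => n ≠ 0), f (s * n + n⁻¹) := by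
    rw [Finset.sum_filter]; refine Finset.sum_congr rfl fun n _ => ?_
    by_cases h : n = 0 <;> simp [h]
  rw [this]
  refine Finset.sum_nbij' (fun n => (s * n + n⁻¹, s * n - n⁻¹)) (fun p => (p.1 + p.2) / (2 * s)) ?_ ?_ ?_ ?_ ?_
  · intro n hn
    simp at hn ⊢
    field_simp; ring
  · rintro ⟨T, y⟩ h
    simp at h ⊢
    refine ⟨?_, h2, hs⟩
    intro h0
    have : (T + y) * (T - y) = 4 * s := by linear_combination -h
    rw [h0, zero_mul] at this
    have h4 : (4:F) ≠ 0 := by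
      have : (4:F) = 2 * 2 := by norm_num
      rw [this]; exact mul_ne_zero h2 h2
    exact (mul_ne_zero h4 hs) this.symm
  · intro n hn
    simp at hn
    field_simp; ring
  · rintro ⟨T, y⟩ h
    simp at h
    have h1 : (T + y) * (T - y) = 4 * s := by linear_combination -h
    have h4 : (4:F) ≠ 0 := by
      have : (4:F) = 2 * 2 := by norm_num
      rw [this]; exact mul_ne_zero h2 h2
    have h0 : T + y ≠ 0 := by
      intro h0; rw [h0, zero_mul] at h1; exact (mul_ne_zero h4 hs) h1.symm
    simp only [Prod.mk.injEq]
    constructor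
    · field_simp
      linear_combination -h1
    · field_simp
      linear_combination h1
  · intro n hn; rfl

theorem hh_conic {φ : MulChar F ℂ} (hs : ∀ x : F, x ≠ 0 → φ (x^2) = 1) (hφ1 : φ ≠ 1)
    (a : F) (ha : a ≠ 0) : ∑ T : F, φ (T * (T + a)) = -1 := by
  classical
  have h1 : ∑ T : F, φ (T * (T + a)) = ∑ T : F, (φ (1 + a * T⁻¹) - if T = 0 then 1 else 0) := by
    refine Finset.sum_congr rfl fun T _ => ?_
    by_cases hT : T = 0
    · simp [hT, MulChar.map_zero]
    · simp only [hT, if_false, sub_zero]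
      exact hh_phi_eq hs T hT (by field_simp)
  rw [h1, Finset.sum_sub_distrib]
  have h3 : ∑ T : F, φ (1 + a * T⁻¹) = ∑ T : F, φ T :=
    Fintype.sum_equiv (((Equiv.inv F).trans (Equiv.mulLeft₀ a ha)).trans (Equiv.addLeft 1)) _ _ (by intro x; simp)
  rw [h3, MulChar.sum_eq_zero_of_ne_one hφ1]
  simp

/-- general shifted conic -/
theorem hh_conic' {φ : MulChar F ℂ} (hs : ∀ x : F, x ≠ 0 → φ (x^2) = 1) (hφ1 : φ ≠ 1)
    (a b : F) (ha : a ≠ b) : ∑ T : F, φ ((T + a) * (T + b)) = -1 := by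
  rw [← hh_conic hs hφ1 (b - a) (sub_ne_zero.2 ha.symm)]
  exact Fintype.sum_equiv (Equiv.addRight a) _ _ (by intro x; simp)

/-- the sum with sign `-1` -/
theorem hh_N2 {φ : MulChar F ℂ} (hs : ∀ x : F, x ≠ 0 → φ (x^2) = 1) (hφ1 : φ ≠ 1) (h2 : (2:F) ≠ 0)
    (hneg : φ (-1) = 1) (s : F) (hs0 : s ≠ 0) :
    ∑ w : F, φ (s * (s * w^2 - 1) * (1 + s * w) * (1 + w))
      = ∑ m : F, φ (s * (1 - s) * m * (m^2 - s)) - φ s := by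
  classical
  by_cases hs1 : s = 1
  · subst hs1
    have h1 : ∑ w : F, φ (1 * (1 * w^2 - 1) * (1 + 1 * w) * (1 + w)) =
        ∑ w : F, φ ((w + 1) * (w + (-1))) := by
      refine Finset.sum_congr rfl fun w _ => ?_
      by_cases hw : w + 1 = 0
      · have : w = -1 := by linear_combination hw
        subst this; simp
      · exact hh_phi_eq hs (w + 1) hw (by ring)
    rw [h1, hh_conic' hs hφ1]
    · simp [MulChar.map_zero]
    · intro h; apply h2; linear_combination h
  have h1s : (1 - s) ≠ 0 := sub_ne_zero.2 (Ne.symm hs1)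
  have e1 : ∑ w : F, φ (s * (s * w^2 - 1) * (1 + s * w) * (1 + w)) =
      ∑ w ∈ Finset.univ.filter (fun w : F => 1 + s * w ≠ 0), φ (s * (s * w^2 - 1) * (1 + s * w) * (1 + w)) := by
    rw [Finset.sum_filter]; refine Finset.sum_congr rfl fun w _ => ?_
    by_cases h : 1 + s * w = 0 <;> simp [h, MulChar.map_zero]
  have e2 : ∑ m : F, φ (s * (1 - s) * m * (m^2 - s)) =
      ∑ m ∈ Finset.univ.filter (fun m : F => 1 - m ≠ 0), φ (s * (1 - s) * m * (m^2 - s)) + φ s := by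
    rw [Finset.sum_filter]
    have : φ s = ∑ m : F, if m = 1 then φ s else 0 := by simp
    rw [this, ← Finset.sum_add_distrib]
    refine Finset.sum_congr rfl fun m _ => ?_
    by_cases h : m = 1
    · subst h
      simp
      rw [← map_mul, ← map_mul]
      exact hh_phi_eq hs (1-s) h1s (by ring)
    · have : 1 - m ≠ 0 := sub_ne_zero.2 (Ne.symm h)
      simp only [h, if_false, this, ne_eq, not_false_eq_true, if_true, add_zero]
  rw [e1, e2, add_sub_cancel_right]
  refine Finset.sum_nbij' (fun w => (s + s * w) / (1 + s * w)) (fun m => (m - s) / (s * (1 - m))) ?_ ?_ ?_ ?_ ?_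
  · intro w hw
    simp only [Finset.mem_filter, Finset.mem_univ, true_and] at hw ⊢
    have : 1 - (s + s * w) / (1 + s * w) = (1 - s) / (1 + s * w) := by field_simp; ring
    rw [this]; exact div_ne_zero h1s hw
  · intro m hm
    simp only [Finset.mem_filter, Finset.mem_univ, true_and] at hm ⊢
    have : 1 + s * ((m - s) / (s * (1 - m))) = (1 - s) / (1 - m) := by field_simp; ring
    rw [this]; exact div_ne_zero h1s hm
  · intro w hw
    simp only [Finset.mem_filter, Finset.mem_univ, true_and] at hw
    have : 1 - (s + s * w) / (1 + s * w) = (1 - s) / (1 + s * w) := by field_simp; ring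
    simp only [this]
    field_simp; ring
  · intro m hm
    simp only [Finset.mem_filter, Finset.mem_univ, true_and] at hm
    have : 1 + s * ((m - s) / (s * (1 - m))) = (1 - s) / (1 - m) := by field_simp; ring
    simp only [this]
    field_simp; ring
  · intro w hw
    simp only [Finset.mem_filter, Finset.mem_univ, true_and] at hw
    symm
    refine hh_phi_eq hs ((1 - s) * s / (1 + s * w)^2) ?_ ?_
    · exact div_ne_zero (mul_ne_zero h1s hs0) (pow_ne_zero _ hw)
    · field_simp; ring

theorem hh_V {φ : MulChar F ℂ} (hs : ∀ x : F, x ≠ 0 → φ (x^2) = 1) (h2 : (2:F) ≠ 0)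
    (hneg : φ (-1) = 1) (s : F) (hs0 : s ≠ 0) (hs1 : s + 1 ≠ 0) :
    ∑ z : F, φ ((z + 2) * ((s+1)^2 / s - z^2)) =
      φ (2 * s) * (∑ T : F, φ (T * (T + 1 + s) * (T^2 - 4 * s)) + 1) := by
  classical
  have h3 : ∑ z : F, φ ((z + 2) * ((s+1)^2 / s - z^2)) =
     ∑ T : F, φ ((2 * (s + 1) * T⁻¹ + 2) * ((s+1)^2 / s - (2 * (s + 1) * T⁻¹)^2)) := by
    symm
    exact Fintype.sum_equiv ((Equiv.inv F).trans (Equiv.mulLeft₀ (2 * (s+1)) (mul_ne_zero h2 hs1))) _ _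
      (by intro x; simp)
  rw [h3, mul_add (φ (2 * s)), Finset.mul_sum]
  have : φ (2 * s) * 1 = ∑ T : F, if T = 0 then φ (2 * s) else 0 := by simp
  rw [this, ← Finset.sum_add_distrib]
  refine Finset.sum_congr rfl fun T _ => ?_
  by_cases hT : T = 0
  · subst hT
    simp only [inv_zero, mul_zero, zero_mul, MulChar.map_zero, if_true, zero_add]
    exact hh_phi_eq hs ((s+1)/s) (div_ne_zero hs1 hs0) (by field_simp; ring)
  · simp only [hT, if_false, add_zero]
    rw [← map_mul]
    exact hh_phi_eq hs ((s+1)/(T^2*s)) (div_ne_zero hs1 (mul_ne_zero (pow_ne_zero _ hT) hs0)) (by field_simp; ring)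

theorem hh_N1 [DecidableEq F] {φ : MulChar F ℂ} (hs : ∀ x : F, x ≠ 0 → φ (x^2) = 1) (hφ1 : φ ≠ 1) (h2 : (2:F) ≠ 0)
    (hc : ∀ a : F, ∑ y : F, (if y ^ 2 = a then (1:ℂ) else 0) = 1 + φ a)
    (s : F) (hs0 : s ≠ 0) :
    ∑ w : F, (if w = 0 then 0 else φ (s * (s * w^2 + 1) * (1 + s * w) * (1 + w)))
      = φ s * (∑ T : F, φ (T * (T + 1 + s)) + ∑ T : F, φ (T * (T + 1 + s) * (T^2 - 4 * s))) := by
  have h1 := hh_sum_T h2 hc s hs0 (fun T => φ (T * (T + 1 + s)))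
  have h3 : ∑ T : F, (1 + φ (T^2 - 4*s)) * φ (T * (T + 1 + s)) =
     (∑ T : F, φ (T * (T + 1 + s)) + ∑ T : F, φ (T * (T + 1 + s) * (T^2 - 4 * s))) := by
    rw [← Finset.sum_add_distrib]
    refine Finset.sum_congr rfl fun T _ => ?_
    rw [map_mul _ (T * (T + 1 + s))]; ring
  rw [← h3, ← h1, Finset.mul_sum]
  refine Finset.sum_congr rfl fun w _ => ?_
  by_cases hw : w = 0
  · simp [hw]
  · simp only [hw, if_false]
    rw [← map_mul]
    exact hh_phi_eq hs w hw (by field_simp; ring)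

theorem hh_Z [DecidableEq F] {φ χ₄ : MulChar F ℂ} (hs : ∀ x : F, x ≠ 0 → φ (x^2) = 1) (h2 : (2:F) ≠ 0)
    (hneg : φ (-1) = 1)
    (hc : ∀ a : F, ∑ y : F, (if y ^ 2 = a then (1:ℂ) else 0) = 1 + φ a)
    (hχ : χ₄ ^ 2 = φ) (C : F) :
    ∑ x : F, χ₄ x * φ (C - x - x⁻¹) = ∑ z : F, φ ((z + 2) * (C + 2 - z^2)) := by
  have hinv : ∀ x : F, χ₄ x⁻¹ = χ₄ x * φ x := by
    intro x
    by_cases hx : x = 0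
    · simp [hx, MulChar.map_zero]
    · have h1 : χ₄ x * χ₄ x⁻¹ = 1 := by rw [← map_mul, mul_inv_cancel₀ hx, map_one]
      have h3 : χ₄ x ^ 2 = φ x := by rw [← hχ, MulChar.pow_apply' _ two_ne_zero]
      have h4 := hh_phi_mul_self hs x hx
      have h5 : χ₄ x ≠ 0 := left_ne_zero_of_mul_eq_one h1
      apply mul_left_cancel₀ h5
      rw [h1, ← h4, ← h3]; ring
  have e1 : ∑ x : F, χ₄ x * φ (C - x - x⁻¹) = ∑ x : F, χ₄ x * φ x * φ (C - x - x⁻¹) := by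
    rw [← Equiv.sum_comp (Equiv.inv F)]
    refine Finset.sum_congr rfl fun x _ => ?_
    simp only [Equiv.inv_apply, inv_inv, hinv]
    ring_nf
  have e2 : 2 * ∑ x : F, χ₄ x * φ (C - x - x⁻¹) = ∑ y : F, φ y * φ (C - y^2 - (y^2)⁻¹) := by
    have h := hh_sum_sq hc (fun x => χ₄ x * φ (C - x - x⁻¹))
    have h3 : ∑ y : F, φ y * φ (C - y^2 - (y^2)⁻¹) = ∑ y : F, χ₄ (y^2) * φ (C - y^2 - (y^2)⁻¹) := by
      refine Finset.sum_congr rfl fun y _ => ?_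
      rw [map_pow, ← hχ, MulChar.pow_apply' _ two_ne_zero]
    rw [h3, h, two_mul]
    nth_rewrite 2 [e1]
    rw [← Finset.sum_add_distrib]
    refine Finset.sum_congr rfl fun x _ => ?_
    ring
  have h := hh_sum_T h2 hc 1 one_ne_zero (fun z => φ ((z + 2) * (C + 2 - z^2)))
  have e3 : ∑ n : F, (if n = 0 then 0 else (fun z => φ ((z + 2) * (C + 2 - z^2))) (1 * n + n⁻¹)) =
      ∑ y : F, φ y * φ (C - y^2 - (y^2)⁻¹) - φ (C - 2) := by
    have : φ (C - 2) = ∑ y : F, if y = -1 then φ (C - 2) else 0 := by simp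
    rw [this, ← Finset.sum_sub_distrib]
    refine Finset.sum_congr rfl fun y _ => ?_
    by_cases hy : y = 0
    · subst hy
      have : (0:F) ≠ -1 := by simp
      simp [MulChar.map_zero, this]
    · by_cases hy1 : y = -1
      · subst hy1
        have : (1 * (-1:F) + (-1)⁻¹ + 2) = 0 := by rw [inv_neg, inv_one]; ring
        simp only [this, zero_mul, MulChar.map_zero, if_true]
        rw [if_neg hy, hneg]
        have : C - (-1)^2 - ((-1:F)^2)⁻¹ = C - 2 := by norm_num; ring
        rw [this]; ring
      · simp only [hy, hy1, if_false, sub_zero]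
        rw [← map_mul]
        have : y + 1 ≠ 0 := fun h => hy1 (by linear_combination h)
        exact hh_phi_eq hs ((y+1)/y) (div_ne_zero this hy) (by field_simp; ring)
  have e4 : ∑ T : F, (1 + φ (T^2 - 4*1)) * (fun z => φ ((z + 2) * (C + 2 - z^2))) T =
      2 * (∑ z : F, φ ((z + 2) * (C + 2 - z^2))) - φ (C - 2) := by
    have h3 : ∑ z : F, φ ((z + 2) * (C + 2 - z^2)) = ∑ z : F, φ ((z - 2) * (C + 2 - z^2)) := by
      rw [← Equiv.sum_comp (Equiv.neg F)]
      refine Finset.sum_congr rfl fun z _ => ?_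
      rw [← one_mul (φ ((z - 2) * (C + 2 - z^2))), ← hneg, ← map_mul]
      congr 1; simp; ring
    rw [two_mul]
    nth_rewrite 2 [h3]
    have : φ (C - 2) = ∑ y : F, if y = -2 then φ (C - 2) else 0 := by simp
    rw [this, ← Finset.sum_add_distrib, ← Finset.sum_sub_distrib]
    refine Finset.sum_congr rfl fun z _ => ?_
    by_cases hz : z = -2
    · subst hz
      simp only [if_true]
      have e : ((-2:F) + 2) * (C + 2 - (-2)^2) = 0 := by ring
      have e' : φ (((-2:F) - 2) * (C + 2 - (-2)^2)) = φ (C - 2) := by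
        rw [← one_mul (φ (C - 2)), ← hneg, ← map_mul]
        exact hh_phi_eq hs 2 h2 (by ring)
      rw [e, e', MulChar.map_zero]; ring
    · simp only [hz, if_false, sub_zero]
      rw [add_mul, one_mul, ← map_mul]
      congr 1
      have : z + 2 ≠ 0 := fun h => hz (by linear_combination h)
      exact hh_phi_eq hs (z+2) this (by ring)
  replace h := e3.symm.trans (h.trans e4)
  have h5 : (2:ℂ) ≠ 0 := two_ne_zero
  apply mul_left_cancel₀ h5
  rw [e2]
  linear_combination h

/-- the sum with sign `+1` -/
theorem hh_N1K [DecidableEq F] {φ χ₄ : MulChar F ℂ} (hs : ∀ x : F, x ≠ 0 → φ (x^2) = 1) (hφ1 : φ ≠ 1) (h2 : (2:F) ≠ 0)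
    (hc : ∀ a : F, ∑ y : F, (if y ^ 2 = a then (1:ℂ) else 0) = 1 + φ a)
    (i : F) (hi : i^2 = -1)
    (hχ : χ₄ ^ 2 = φ) (s : F) (hs0 : s ≠ 0) :
    ∑ w : F, (if w = 0 then 0 else φ (s * (s * w^2 + 1) * (1 + s * w) * (1 + w)))
      = ∑ x : F, χ₄ x * φ (x + x⁻¹ + s + s⁻¹) - 2 * φ s
        + if s = -1 then (Fintype.card F : ℂ) else 0 := by
  have hi0 : i ≠ 0 := by rintro rfl; simp at hi
  have hneg : φ (-1) = 1 := by rw [← hi]; exact hs i hi0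
  have h4 : χ₄ (-1) = φ 2 := by
    rw [← hi, map_pow, ← MulChar.pow_apply' _ two_ne_zero, hχ]
    have h1 : 1 + i ≠ 0 := by
      intro h
      have : i = -1 := by linear_combination h
      rw [this] at hi; apply h2; linear_combination hi
    refine hh_phi_eq hs ((1+i)/2) (div_ne_zero h1 h2) ?_
    field_simp
    linear_combination -hi
  have hk : ∑ x : F, χ₄ x * φ (x + x⁻¹ + s + s⁻¹) =
     φ 2 * ∑ z : F, φ ((z + 2) * ((s+1)^2/s - z^2)) := by
    have : (s+1)^2/s = (s + s⁻¹) + 2 := by field_simp; ring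
    rw [this, ← hh_Z hs h2 hneg hc hχ, ← h4, Finset.mul_sum, ← Equiv.sum_comp (Equiv.neg F)]
    refine Finset.sum_congr rfl fun x _ => ?_
    rw [← mul_assoc, ← map_mul]
    simp only [Equiv.neg_apply, inv_neg, neg_one_mul]
    ring_nf
  rw [hh_N1 hs hφ1 h2 hc s hs0]
  by_cases hs1 : s = -1
  · subst hs1
    simp only [if_true]
    have e1 : ∑ T : F, φ (T * (T + 1 + -1)) = (Fintype.card F : ℂ) - 1 := by
      have : ∀ T : F, φ (T * (T + 1 + -1)) = 1 - if T = 0 then 1 else 0 := by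
        intro T
        by_cases hT : T = 0
        · simp [hT, MulChar.map_zero]
        · simp only [hT, if_false, sub_zero]
          rw [show T * (T + 1 + -1) = T^2 by ring, hs T hT]
      rw [Finset.sum_congr rfl (fun T _ => this T), Finset.sum_sub_distrib]
      simp
    have e2 : ∑ T : F, φ (T * (T + 1 + -1) * (T^2 - 4 * -1)) = -2 := by
      have : ∀ T : F, φ (T * (T + 1 + -1) * (T^2 - 4 * -1)) = φ ((T + 2*i) * (T + (-(2*i)))) - if T = 0 then 1 else 0 := by
        intro T
        by_cases hT : T = 0
        · subst hT
          simp only [if_true]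
          rw [show ((0:F) + 2*i) * (0 + -(2*i)) = 2^2 by linear_combination (-4)*hi, hs 2 h2]
          simp [MulChar.map_zero]
        · simp only [hT, if_false, sub_zero]
          exact hh_phi_eq hs T hT (by linear_combination (-4*T^2)*(-hi))
      rw [Finset.sum_congr rfl (fun T _ => this T), Finset.sum_sub_distrib]
      rw [hh_conic' hs hφ1]
      · simp; norm_num
      · intro h
        have : (2*2)*i = 0 := by linear_combination h
        exact (mul_ne_zero (mul_ne_zero h2 h2) hi0) this
    have e3 : ∑ x : F, χ₄ x * φ (x + x⁻¹ + -1 + (-1)⁻¹) = -1 := by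
      have : ∀ x : F, χ₄ x * φ (x + x⁻¹ + -1 + (-1)⁻¹) = (χ₄ * φ) x - if x = 1 then 1 else 0 := by
        intro x
        rw [MulChar.mul_apply]
        by_cases hx0 : x = 0
        · subst hx0; simp [MulChar.map_zero]
        by_cases hx : x = 1
        · subst hx
          have : (1:F) + 1⁻¹ + -1 + (-1)⁻¹ = 0 := by rw [inv_neg, inv_one]; ring
          rw [this]; simp [MulChar.map_zero]
        · simp only [hx, if_false, sub_zero]
          congr 1
          refine hh_phi_eq hs ((x-1)/x) (div_ne_zero (sub_ne_zero.2 hx) hx0) ?_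
          rw [inv_neg, inv_one]
          field_simp; ring
      simp only [this, Finset.sum_sub_distrib]
      rw [MulChar.sum_eq_zero_of_ne_one]
      · simp
      · intro h
        apply hφ1
        have h6 : φ^2 = 1 := by
          ext u; rw [MulChar.pow_apply' _ two_ne_zero, ← map_pow, hs _ u.ne_zero, MulChar.one_apply u.isUnit]
        have : (χ₄ * φ)^2 = 1 := by rw [h, one_pow]
        rw [mul_pow, h6, mul_one, hχ] at this
        exact this
    rw [e1, e2, e3, hneg]; ring
  · have hs1' : s + 1 ≠ 0 := fun h => hs1 (by linear_combination h)
    simp only [hs1, if_false, add_zero]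
    rw [hk, hh_V hs h2 hneg s hs0 hs1']
    have : ∑ T : F, φ (T * (T + 1 + s)) = -1 := by
      simp_rw [add_assoc]
      apply hh_conic hs hφ1
      rwa [add_comm]
    rw [this, map_mul]
    have := hh_phi_mul_self hs 2 h2
    linear_combination (-(φ s * (∑ T : F, φ (T * (T + 1 + s) * (T^2 - 4 * s)) + 1))) * this

theorem hh_orth [Fintype (MulChar F ℂ)] [DecidableEq F] (x : F) :
    ∑ χ : MulChar F ℂ, χ x = if x = 1 then (Fintype.card F : ℂ) - 1 else 0 := by
  by_cases hx : x = 1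
  · subst hx
    have h := MulChar.card_eq_card_units_of_hasEnoughRootsOfUnity F ℂ
    rw [Nat.card_eq_fintype_card, Nat.card_eq_fintype_card, Fintype.card_units] at h
    have hq : 1 ≤ Fintype.card F := Fintype.card_pos
    simp [h, Nat.cast_sub hq]
  · rw [if_neg hx]
    obtain ⟨ψ, hψ⟩ := MulChar.exists_apply_ne_one_of_hasEnoughRootsOfUnity F ℂ hx
    have h : ψ x * ∑ χ : MulChar F ℂ, χ x = ∑ χ : MulChar F ℂ, χ x := by
      rw [Finset.mul_sum]
      exact Fintype.sum_equiv (Equiv.mulLeft ψ) _ _ (by intro χ; simp)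
    have h1 : (ψ x - 1) * ∑ χ : MulChar F ℂ, χ x = 0 := by rw [sub_mul, h]; ring
    exact (mul_eq_zero.1 h1).resolve_left (sub_ne_zero.2 hψ)

theorem hh_orth2 [DecidableEq (MulChar F ℂ)] (ψ : MulChar F ℂ) :
    ∑ x : F, ψ x = if ψ = 1 then (Fintype.card F : ℂ) - 1 else 0 := by
  classical
  by_cases h : ψ = 1
  · have hq : 1 ≤ Fintype.card F := Fintype.card_pos
    rw [if_pos h, h, MulChar.sum_one_eq_card_units, Fintype.card_units, Nat.cast_sub hq]; simp
  · rw [if_neg h, MulChar.sum_eq_zero_of_ne_one h]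

theorem hh_card_ne : (Fintype.card F : ℂ) - 1 ≠ 0 := by
  rw [sub_ne_zero]
  exact_mod_cast (Fintype.one_lt_card (α := F)).ne'

theorem hh_sqroots [Fintype (MulChar F ℂ)] [DecidableEq F] [DecidableEq (MulChar F ℂ)] (C : MulChar F ℂ) (m : F) :
    ∑ S ∈ Finset.univ.filter (fun S : MulChar F ℂ => S ^ 2 = C), S m
      = ∑ n : F, if n ^ 2 = m then C n else 0 := by
  apply mul_left_cancel₀ (hh_card_ne (F := F))
  have e1 : ((Fintype.card F : ℂ) - 1) * ∑ S ∈ Finset.univ.filter (fun S : MulChar F ℂ => S ^ 2 = C), S m =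
      ∑ S : MulChar F ℂ, ∑ n : F, S m * (C * (S^2)⁻¹) n := by
    rw [Finset.sum_filter, Finset.mul_sum]
    refine Finset.sum_congr rfl fun S _ => ?_
    rw [← Finset.mul_sum, hh_orth2]
    by_cases h : S^2 = C
    · rw [if_pos h, if_pos (by rw [h]; simp)]; ring
    · rw [if_neg h, if_neg (by rw [mul_inv_eq_one]; exact fun h' => h h'.symm)]; ring
  have e2 : ((Fintype.card F : ℂ) - 1) * ∑ n : F, (if n ^ 2 = m then C n else 0) =
      ∑ n : F, ∑ S : MulChar F ℂ, S m * (C * (S^2)⁻¹) n := by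
    rw [Finset.mul_sum]
    refine Finset.sum_congr rfl fun n _ => ?_
    have : ∀ S : MulChar F ℂ, S m * (C * (S^2)⁻¹) n = C n * S (m * (n^2)⁻¹) := by
      intro S
      rw [MulChar.mul_apply, MulChar.inv_apply', MulChar.pow_apply' _ two_ne_zero, map_mul, ← inv_pow, map_pow]
      ring
    simp_rw [this]
    rw [← Finset.mul_sum, hh_orth]
    by_cases hn : n = 0
    · subst hn; simp [MulChar.map_zero]
    · have hn2 : n^2 ≠ 0 := pow_ne_zero _ hn
      by_cases h : n^2 = m
      · rw [if_pos h, if_pos (by rw [← h]; field_simp)]; ring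
      · rw [if_neg h, if_neg (by rw [mul_inv_eq_one₀ hn2]; exact fun h' => h h'.symm)]; ring
  rw [e1, e2, Finset.sum_comm]

theorem hh_J (a b : MulChar F ℂ) : jacobiSum a b = ∑ u : F, a u * (a * b)⁻¹ (1 + u) := by
  classical
  unfold jacobiSum
  have e1 : ∑ x : F, a x * b (1 - x) = ∑ x ∈ Finset.univ.filter (fun x : F => 1 - x ≠ 0), a x * b (1 - x) := by
    rw [Finset.sum_filter]; refine Finset.sum_congr rfl fun x _ => ?_
    by_cases h : 1 - x = 0 <;> simp [h, MulChar.map_zero]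
  have e2 : ∑ u : F, a u * (a * b)⁻¹ (1 + u) =
      ∑ u ∈ Finset.univ.filter (fun x : F => 1 + x ≠ 0), a u * (a * b)⁻¹ (1 + u) := by
    rw [Finset.sum_filter]; refine Finset.sum_congr rfl fun x _ => ?_
    by_cases h : 1 + x = 0
    · rw [h, MulChar.map_zero]; simp
    · simp [h]
  rw [e1, e2]
  refine Finset.sum_nbij' (fun x => x / (1 - x)) (fun u => u / (1 + u)) ?_ ?_ ?_ ?_ ?_
  · intro x hx
    simp only [Finset.mem_filter, Finset.mem_univ, true_and] at hx ⊢
    have : 1 + x / (1 - x) = 1 / (1 - x) := by field_simp; ring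
    rw [this]; exact one_div_ne_zero hx
  · intro x hx
    simp only [Finset.mem_filter, Finset.mem_univ, true_and] at hx ⊢
    have : 1 - x / (1 + x) = 1 / (1 + x) := by field_simp; ring
    rw [this]; exact one_div_ne_zero hx
  · intro x hx
    simp only [Finset.mem_filter, Finset.mem_univ, true_and] at hx
    have : 1 + x / (1 - x) = 1 / (1 - x) := by field_simp; ring
    simp only [this]; field_simp
  · intro x hx
    simp only [Finset.mem_filter, Finset.mem_univ, true_and] at hx
    have : 1 - x / (1 + x) = 1 / (1 + x) := by field_simp; ring
    simp only [this]; field_simp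
  · intro x hx
    simp only [Finset.mem_filter, Finset.mem_univ, true_and] at hx
    have : 1 + x / (1 - x) = (1 - x)⁻¹ := by field_simp; ring
    rw [this, MulChar.inv_apply', inv_inv, MulChar.mul_apply, div_eq_mul_inv, map_mul]
    have h1 : a (1 - x)⁻¹ * a (1 - x) = 1 := by
      rw [← map_mul, inv_mul_cancel₀ hx, map_one]
    linear_combination (-(a x * b (1 - x))) * h1

/-- Hasse-Davenport for the quadratic character -/
theorem hh_HD [DecidableEq F] {φ : MulChar F ℂ} (θ : AddChar F ℂ) (hs : ∀ x : F, x ≠ 0 → φ (x^2) = 1) (hφ1 : φ ≠ 1) (h2 : (2:F) ≠ 0)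
    (hc : ∀ a : F, ∑ y : F, (if y ^ 2 = a then (1:ℂ) else 0) = 1 + φ a)
    (hq : ∀ ψ : MulChar F ℂ, ψ^2 = 1 → ψ ≠ 1 → ψ = φ) (hg : ∀ ψ : MulChar F ℂ, gaussSum ψ θ ≠ 0)
    (ψ : MulChar F ℂ) :
    ψ 4 * (gaussSum ψ θ * gaussSum (φ * ψ) θ) = gaussSum φ θ * gaussSum (ψ^2) θ := by
  have h4 : (4:F) = 2^2 := by norm_num
  have hφ2 : φ^2 = 1 := by
    ext u; rw [MulChar.pow_apply' _ two_ne_zero, ← map_pow, hs _ u.ne_zero, MulChar.one_apply u.isUnit]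
  by_cases h1 : ψ = 1
  · subst h1
    rw [MulChar.one_apply (isUnit_iff_ne_zero.2 (by rw [h4]; exact pow_ne_zero _ h2))]
    rw [one_pow, mul_one]; ring
  by_cases h3 : ψ = φ
  · rw [h3, h4, hs 2 h2, ← sq, hφ2]; ring
  have h5 : ψ * ψ ≠ 1 := fun h => h3 (hq ψ (by rw [sq, h]) h1)
  have h6 : φ * ψ ≠ 1 := by
    intro h
    apply h3
    have : φ * φ = 1 := by rw [← sq, hφ2]
    exact mul_left_cancel (h.trans this.symm)
  have j1 := jacobiSum_mul_nontrivial h5 θ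
  have j2 := jacobiSum_mul_nontrivial h6 θ
  have key : ψ 4 * jacobiSum ψ ψ = jacobiSum φ ψ := by
    unfold jacobiSum
    have e1 : ψ 4 * ∑ x : F, ψ x * ψ (1 - x) = ∑ y : F, ψ (1 - y^2) := by
      rw [Finset.mul_sum]
      refine Fintype.sum_equiv ((Equiv.mulLeft₀ 2 h2).trans (Equiv.subRight 1)) _ _ ?_
      intro x
      simp only [Equiv.trans_apply, Equiv.mulLeft₀_apply, Equiv.subRight_apply]
      rw [← map_mul, ← map_mul]; congr 1; ring
    rw [e1, hh_sum_sq hc (fun u => ψ (1 - u))]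
    simp_rw [add_mul, one_mul]
    rw [Finset.sum_add_distrib]
    have : ∑ u : F, ψ (1 - u) = 0 := by
      rw [← MulChar.sum_eq_zero_of_ne_one h1]
      exact Fintype.sum_equiv (Equiv.subLeft 1) _ _ (by intro x; simp)
    rw [this, zero_add]
  rw [← sq] at j1
  apply mul_left_cancel₀ (hg ψ)
  linear_combination (-(ψ 4) * gaussSum (φ * ψ) θ) * j1 + gaussSum (ψ^2) θ * gaussSum (φ * ψ) θ * key + gaussSum (ψ^2) θ * j2

/-- evaluation of the `R` sum -/
theorem hh_Rsum [Fintype (MulChar F ℂ)] [DecidableEq F] [DecidableEq (MulChar F ℂ)] {φ : MulChar F ℂ}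
    (hs : ∀ x : F, x ≠ 0 → φ (x^2) = 1) (B : MulChar F ℂ) :
    ∑ R ∈ Finset.univ.filter (fun R : MulChar F ℂ => R ^ 2 = φ), jacobiSum (R * B) (R * B⁻¹) * jacobiSum R R
      = ∑ s : F, B s * ∑ m : F, φ (s * (1 + s) * m * (m^2 + s)) := by
  have hinv : φ⁻¹ = φ := by
    ext u; rw [MulChar.inv_apply', hh_phi_inv hs]
  have e1 : ∀ R ∈ Finset.univ.filter (fun R : MulChar F ℂ => R ^ 2 = φ),
      jacobiSum (R * B) (R * B⁻¹) * jacobiSum R R =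
        ∑ u : F, ∑ v : F, B u * φ (1 + u) * φ (1 + v) * R (u * v) := by
    intro R hR
    simp only [Finset.mem_filter, Finset.mem_univ, true_and] at hR
    rw [hh_J, hh_J, show R * B * (R * B⁻¹) = R^2 by rw [sq]; exact mul_mul_mul_comm _ _ _ _ |>.trans (by simp), ← sq, hR, hinv,
      Finset.sum_mul_sum]
    refine Finset.sum_congr rfl fun u _ => Finset.sum_congr rfl fun v _ => ?_
    rw [MulChar.mul_apply, map_mul]; ring
  rw [Finset.sum_congr rfl e1, Finset.sum_comm]
  refine Finset.sum_congr rfl fun u _ => ?_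
  by_cases hu : u = 0
  · subst hu; simp [MulChar.map_zero]
  rw [Finset.sum_comm]
  simp_rw [← Finset.mul_sum, hh_sqroots, Finset.mul_sum]
  rw [Finset.sum_comm]
  refine Finset.sum_congr rfl fun n _ => ?_
  rw [Finset.sum_eq_single (n^2 / u)]
  · rw [if_pos (by field_simp), mul_assoc, mul_assoc, ← map_mul, ← map_mul]
    congr 1
    exact hh_phi_eq hs (u⁻¹) (inv_ne_zero hu) (by field_simp; ring)
  · intro v _ hv
    rw [if_neg, mul_zero]
    intro h; apply hv; rw [h]; field_simp
  · simp

/-- evaluation of the `S` sum -/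
theorem hh_Ssum [Fintype (MulChar F ℂ)] [DecidableEq F] [DecidableEq (MulChar F ℂ)] {φ χ₄ : MulChar F ℂ}
    (hs : ∀ x : F, x ≠ 0 → φ (x^2) = 1) (hχ : χ₄^2 = φ) (A : MulChar F ℂ) :
    ∑ S ∈ Finset.univ.filter (fun S : MulChar F ℂ => S ^ 2 = χ₄),
      jacobiSum (S * A) (S^3 * A⁻¹) * jacobiSum (S^3 * A) (S * A⁻¹)
      = ∑ s : F, (A^2) s * ∑ x : F, χ₄ x * φ (x + x⁻¹ + s + s⁻¹) := by
  have hinv : φ⁻¹ = φ := by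
    ext u; rw [MulChar.inv_apply', hh_phi_inv hs]
  have e1 : ∀ S ∈ Finset.univ.filter (fun S : MulChar F ℂ => S ^ 2 = χ₄),
      jacobiSum (S * A) (S^3 * A⁻¹) * jacobiSum (S^3 * A) (S * A⁻¹) =
        ∑ u : F, ∑ v : F, A (u * v) * φ (1 + u) * φ (1 + v) * S (u * v^3) := by
    intro S hS
    simp only [Finset.mem_filter, Finset.mem_univ, true_and] at hS
    have h4 : S^4 = φ := by rw [← hχ, ← hS, ← pow_mul]
    have h5 : S * A * (S^3 * A⁻¹) = φ := by
      rw [← h4, mul_mul_mul_comm, mul_inv_cancel, mul_one, ← pow_succ']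
    have h6 : S^3 * A * (S * A⁻¹) = φ := by
      rw [← h4, mul_mul_mul_comm, mul_inv_cancel, mul_one, ← pow_succ]
    rw [hh_J, hh_J, h5, h6, hinv, Finset.sum_mul_sum]
    refine Finset.sum_congr rfl fun u _ => Finset.sum_congr rfl fun v _ => ?_
    rw [MulChar.mul_apply, MulChar.mul_apply, MulChar.pow_apply' _ three_ne_zero, map_mul, map_mul, map_pow]; ring
  rw [Finset.sum_congr rfl e1, Finset.sum_comm]
  have e2 : ∀ u : F, ∑ S ∈ Finset.univ.filter (fun S : MulChar F ℂ => S ^ 2 = χ₄),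
      ∑ v : F, A (u * v) * φ (1 + u) * φ (1 + v) * S (u * v^3) =
      ∑ v : F, ∑ n : F, A (u * v) * φ (1 + u) * φ (1 + v) * (if n^2 = u * v^3 then χ₄ n else 0) := by
    intro u
    rw [Finset.sum_comm]
    simp_rw [← Finset.mul_sum, hh_sqroots]
  simp_rw [e2]
  rw [Finset.sum_comm]
  -- v outer, u, n
  have e3 : ∀ v : F, ∑ u : F, ∑ n : F, A (u * v) * φ (1 + u) * φ (1 + v) * (if n^2 = u * v^3 then χ₄ n else 0)
      = ∑ k : F, if v = 0 then 0 else (A^2) k * φ (1 + k^2/v) * φ (1 + v) * χ₄ (k * v) := by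
    intro v
    by_cases hv : v = 0
    · subst hv; simp [MulChar.map_zero]
    simp only [hv, if_false]
    rw [Finset.sum_comm]
    symm
    refine Fintype.sum_equiv (Equiv.mulRight₀ v hv) _ _ ?_
    intro k
    rw [Finset.sum_eq_single (k^2/v)]
    · simp only [Equiv.mulRight₀_apply]
      rw [if_pos (by field_simp), show k^2/v*v = k^2 by field_simp, MulChar.pow_apply' _ two_ne_zero, map_pow]
    · intro u _ hu
      simp only [Equiv.mulRight₀_apply]
      rw [if_neg, mul_zero]
      intro h; apply hu
      field_simp
      apply mul_right_cancel₀ (pow_ne_zero 2 hv)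
      linear_combination -h
    · simp
  simp_rw [e3]
  rw [Finset.sum_comm]
  refine Finset.sum_congr rfl fun k _ => ?_
  by_cases hk : k = 0
  · subst hk; simp [MulChar.map_zero]
  rw [Finset.mul_sum]
  symm
  refine Fintype.sum_equiv (Equiv.mulLeft₀ k hk) _ _ ?_
  intro x
  simp only [Equiv.mulLeft₀_apply]
  by_cases hx : x = 0
  · subst hx; simp [MulChar.map_zero]
  rw [if_neg (mul_ne_zero hk hx), show k * (k * x) = k^2 * x by ring, map_mul χ₄, map_pow,
    ← MulChar.pow_apply' _ two_ne_zero, hχ]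
  have : φ (x + x⁻¹ + k + k⁻¹) = φ (1 + k^2/(k*x)) * φ (1 + k * x) * φ k := by
    rw [← map_mul, ← map_mul]
    symm
    exact hh_phi_eq hs k hk (by field_simp; ring)
  rw [this]; ring

theorem hh_Xsum [Fintype (MulChar F ℂ)] [DecidableEq F] {φ : MulChar F ℂ} (h2 : (2:F) ≠ 0)
    (hs : ∀ x : F, x ≠ 0 → φ (x^2) = 1) (hneg : φ (-1) = 1) (B : MulChar F ℂ) :
    ∑ χ : MulChar F ℂ, jacobiSum (φ * χ^2) (χ^2)⁻¹ * jacobiSum (φ * (B * χ^2)) (B * χ^2)⁻¹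
        * jacobiSum (φ * (B⁻¹ * χ^2)) (B⁻¹ * χ^2)⁻¹
      = ((Fintype.card F : ℂ) - 1) * ∑ s : F, B s *
        (∑ w : F, (if w = 0 then 0 else φ (s * (s * w^2 + 1) * (1 + s * w) * (1 + w))) +
         ∑ w : F, (if w = 0 then 0 else φ (s * (s * w^2 - 1) * (1 + s * w) * (1 + w)))) := by
  have hinv : φ⁻¹ = φ := by
    ext u; rw [MulChar.inv_apply', hh_phi_inv hs]
  have hJ : ∀ ψ : MulChar F ℂ, jacobiSum (φ * ψ) ψ⁻¹ = ∑ u : F, φ u * ψ u * φ (1 + u) := by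
    intro ψ
    rw [hh_J, mul_inv_cancel_right, hinv]
    rfl
  have h11 : (1:F) ≠ -1 := fun h => h2 (by linear_combination h)
  have e1 : ∀ χ : MulChar F ℂ, jacobiSum (φ * χ^2) (χ^2)⁻¹ * jacobiSum (φ * (B * χ^2)) (B * χ^2)⁻¹
        * jacobiSum (φ * (B⁻¹ * χ^2)) (B⁻¹ * χ^2)⁻¹ =
      ∑ w : F, ∑ v : F, ∑ u : F, (φ u * φ (1+u) * (φ v * B v * φ (1+v)) * (φ w * B⁻¹ w * φ (1+w))) * χ ((u*v*w)^2) := by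
    intro χ
    rw [hJ, hJ, hJ, mul_comm, Finset.sum_mul]
    refine Finset.sum_congr rfl fun w _ => ?_
    rw [mul_comm (∑ u : F, _), Finset.sum_mul_sum, Finset.mul_sum]
    refine Finset.sum_congr rfl fun v _ => ?_
    rw [Finset.mul_sum]
    refine Finset.sum_congr rfl fun u _ => ?_
    simp only [MulChar.mul_apply, MulChar.pow_apply' _ two_ne_zero, map_pow, map_mul]
    ring
  simp_rw [e1]
  rw [Finset.sum_comm]
  have e2 : ∀ w : F, ∑ χ : MulChar F ℂ, ∑ v : F, ∑ u : F, (φ u * φ (1+u) * (φ v * B v * φ (1+v)) * (φ w * B⁻¹ w * φ (1+w))) * χ ((u*v*w)^2)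
      = ∑ s : F, ((Fintype.card F : ℂ) - 1) * (B s * ((if w = 0 then 0 else φ (s * (s * w^2 + 1) * (1 + s * w) * (1 + w)))
         + (if w = 0 then 0 else φ (s * (s * w^2 - 1) * (1 + s * w) * (1 + w))))) := by
    intro w
    by_cases hw : w = 0
    · subst hw; simp [MulChar.map_zero]
    simp only [hw, if_false]
    rw [Finset.sum_comm]
    symm
    refine Fintype.sum_equiv (Equiv.mulRight₀ w hw) _ _ ?_
    intro s
    simp only [Equiv.mulRight₀_apply]
    by_cases hs0 : s = 0
    · subst hs0; simp [MulChar.map_zero]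
    rw [Finset.sum_comm]
    simp_rw [← Finset.mul_sum, hh_orth]
    have hd0 : s * w * w ≠ 0 := mul_ne_zero (mul_ne_zero hs0 hw) hw
    have hiff : ∀ u : F, (u * (s * w) * w)^2 = 1 ↔ u = (s * w * w)⁻¹ ∨ u = -(s * w * w)⁻¹ := by
      intro u
      rw [sq_eq_one_iff]
      constructor
      · rintro (h | h)
        · left; field_simp; linear_combination h
        · right; field_simp; linear_combination h
      · rintro (h | h)
        · left; rw [h]; field_simp
        · right; rw [h]; field_simp
    have hne : (s * w * w)⁻¹ ≠ -(s * w * w)⁻¹ := by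
      intro h
      have : (s * w * w)⁻¹ * 2 = 0 := by linear_combination h
      exact (mul_ne_zero (inv_ne_zero hd0) h2) this
    have hB : B (s * w) * B⁻¹ w = B s := by
      rw [MulChar.inv_apply', ← map_mul]; congr 1; field_simp
    rw [← Finset.sum_subset (Finset.subset_univ {(s * w * w)⁻¹, -(s * w * w)⁻¹})]
    · rw [Finset.sum_pair hne, if_pos ((hiff _).2 (Or.inl rfl)), if_pos ((hiff _).2 (Or.inr rfl))]
      have t1 : φ (s * (s * w^2 + 1) * (1 + s * w) * (1 + w)) =
          φ ((s*w*w)⁻¹) * φ (1 + (s*w*w)⁻¹) * (φ (s * w) * φ (1 + s * w)) * (φ w * φ (1 + w)) := by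
        simp only [← map_mul]
        exact hh_phi_eq hs (s * w) (mul_ne_zero hs0 hw) (by field_simp)
      have t2 : φ (s * (s * w^2 - 1) * (1 + s * w) * (1 + w)) =
          φ (-(s*w*w)⁻¹) * φ (1 + -(s*w*w)⁻¹) * (φ (s * w) * φ (1 + s * w)) * (φ w * φ (1 + w)) := by
        rw [← one_mul (φ (s * (s * w^2 - 1) * (1 + s * w) * (1 + w))), ← hneg]
        simp only [← map_mul]
        exact hh_phi_eq hs (s * w) (mul_ne_zero hs0 hw) (by field_simp; ring)
      rw [t1, t2, ← hB]; ring
    · intro u _ hu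
      rw [if_neg, mul_zero]
      rw [hiff]; simpa using hu
  simp_rw [e2]
  rw [Finset.sum_comm, Finset.mul_sum]
  refine Finset.sum_congr rfl fun s _ => ?_
  rw [← Finset.mul_sum, ← Finset.mul_sum, Finset.sum_add_distrib]

theorem hh_total [Fintype (MulChar F ℂ)] [DecidableEq F] [DecidableEq (MulChar F ℂ)] {φ χ₄ : MulChar F ℂ} (h2 : (2:F) ≠ 0)
    (hs : ∀ x : F, x ≠ 0 → φ (x^2) = 1) (hφ1 : φ ≠ 1)
    (hc : ∀ a : F, ∑ y : F, (if y ^ 2 = a then (1:ℂ) else 0) = 1 + φ a)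
    (i : F) (hi : i^2 = -1) (hχ : χ₄ ^ 2 = φ) (A : MulChar F ℂ) (hA : A^2 * φ ≠ 1) :
    ∑ s : F, (A^2) s *
        (∑ w : F, (if w = 0 then 0 else φ (s * (s * w^2 + 1) * (1 + s * w) * (1 + w))) +
         ∑ w : F, (if w = 0 then 0 else φ (s * (s * w^2 - 1) * (1 + s * w) * (1 + w))))
    = (Fintype.card F : ℂ)
      + ∑ R ∈ Finset.univ.filter (fun R : MulChar F ℂ => R ^ 2 = φ),
          jacobiSum (R * A^2) (R * (A^2)⁻¹) * jacobiSum R R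
      + ∑ S ∈ Finset.univ.filter (fun S : MulChar F ℂ => S ^ 2 = χ₄),
          jacobiSum (S * A) (S^3 * A⁻¹) * jacobiSum (S^3 * A) (S * A⁻¹) := by
  have hi0 : i ≠ 0 := by rintro rfl; simp at hi
  have hneg : φ (-1) = 1 := by rw [← hi]; exact hs i hi0
  have hB1 : (A^2) (-1) = 1 := by
    rw [MulChar.pow_apply' _ two_ne_zero, ← map_pow]; simp
  rw [hh_Rsum hs, hh_Ssum hs hχ]
  have r1 : ∑ s : F, (A^2) s * ∑ m : F, φ (s * (1 + s) * m * (m^2 + s)) =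
      ∑ s : F, (A^2) s * ∑ m : F, φ (s * (1 - s) * m * (m^2 - s)) := by
    rw [← Equiv.sum_comp (Equiv.neg F)]
    refine Finset.sum_congr rfl fun s _ => ?_
    simp only [Equiv.neg_apply]
    rw [← neg_one_mul s, map_mul, hB1, one_mul]
    congr 1
    refine Finset.sum_congr rfl fun m _ => ?_
    rw [← one_mul (φ (s * (1 - s) * m * (m^2 - s))), ← hneg, ← map_mul]
    congr 1; ring
  have r2 : ∑ s : F, (A^2) s * φ s = 0 := by
    rw [← MulChar.sum_eq_zero_of_ne_one hA]; rfl
  have r3 : (Fintype.card F : ℂ) = ∑ s : F, (A^2) s * (if s = -1 then (Fintype.card F : ℂ) else 0) := by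
    simp only [mul_ite, mul_zero]
    rw [Finset.sum_ite_eq' ]; simp [hB1]
  have r4 : ∀ s : F, (A^2) s *
        (∑ w : F, (if w = 0 then 0 else φ (s * (s * w^2 + 1) * (1 + s * w) * (1 + w))) +
         ∑ w : F, (if w = 0 then 0 else φ (s * (s * w^2 - 1) * (1 + s * w) * (1 + w))))
      = (A^2) s * (if s = -1 then (Fintype.card F : ℂ) else 0)
        + (A^2) s * ∑ m : F, φ (s * (1 - s) * m * (m^2 - s))
        + (A^2) s * ∑ x : F, χ₄ x * φ (x + x⁻¹ + s + s⁻¹) - 4 * ((A^2) s * φ s) := by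
    intro s
    by_cases hs0 : s = 0
    · subst hs0; simp only [MulChar.map_zero, zero_mul]; simp
    rw [hh_N1K hs hφ1 h2 hc i hi hχ s hs0]
    have : ∑ w : F, (if w = 0 then 0 else φ (s * (s * w^2 - 1) * (1 + s * w) * (1 + w))) =
       ∑ w : F, φ (s * (s * w^2 - 1) * (1 + s * w) * (1 + w)) - φ s := by
      have h : φ s = ∑ w : F, if w = 0 then φ s else 0 := by simp
      rw [h, ← Finset.sum_sub_distrib]
      refine Finset.sum_congr rfl fun w _ => ?_
      by_cases hw : w = 0
      · subst hw
        simp only [if_true]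
        rw [show s * (s * 0^2 - 1) * (1 + s * 0) * (1 + 0) = -1 * s by ring, map_mul, hneg]; ring
      · simp [hw]
    rw [this, hh_N2 hs hφ1 h2 hneg s hs0]
    ring
  rw [r1]
  simp_rw [r4]
  rw [Finset.sum_sub_distrib, Finset.sum_add_distrib, Finset.sum_add_distrib, ← r3, ← Finset.mul_sum, r2]
  ring

end helpers


section final
variable {F : Type} [Field F] [Fintype F]

theorem hh_ginv (θ : AddChar F ℂ) (hθ : θ ≠ 1) {ψ : MulChar F ℂ} (hψ : ψ ≠ 1) :
    gaussSum ψ θ * gaussSum ψ⁻¹ θ = ψ (-1) * (Fintype.card F : ℂ) := by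
  have h1 := gaussSum_mul_gaussSum_eq_card hψ (AddChar.IsPrimitive.of_ne_one hθ)
  have h2 := mul_gaussSum_inv_eq_gaussSum ψ⁻¹ θ
  have h3 : ψ⁻¹ (-1) = ψ (-1) := by rw [MulChar.inv_apply', inv_neg, inv_one]
  rw [← h2, ← h1, h3]; ring

theorem hh_gne (θ : AddChar F ℂ) (hθ : θ ≠ 1) (ψ : MulChar F ℂ) : gaussSum ψ θ ≠ 0 := by
  by_cases h : ψ = 1
  · rw [h, gaussSum_one_left hθ]; norm_num
  · refine gaussSum_ne_zero_of_nontrivial ?_ h (AddChar.IsPrimitive.of_ne_one hθ)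
    exact_mod_cast Fintype.card_ne_zero

theorem hh_sign (ψ : MulChar F ℂ) : ψ (-1) * ψ (-1) = 1 := by
  rw [← map_mul]; simp

theorem hh_pair [DecidableEq F] {φ χ₄ : MulChar F ℂ} (θ : AddChar F ℂ) (hθ : θ ≠ 1)
    (hs : ∀ x : F, x ≠ 0 → φ (x^2) = 1) (hφ1 : φ ≠ 1) (h2 : (2:F) ≠ 0)
    (hc : ∀ a : F, ∑ y : F, (if y ^ 2 = a then (1:ℂ) else 0) = 1 + φ a)
    (hq : ∀ ψ : MulChar F ℂ, ψ^2 = 1 → ψ ≠ 1 → ψ = φ)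
    (hφ2 : φ ^ 2 = 1) (hχ : χ₄ ^ 2 = φ) (X : MulChar F ℂ) :
    χ₄ 4 * (gaussSum (χ₄ * X) θ * gaussSum (χ₄⁻¹ * X) θ * (gaussSum X⁻¹ θ * gaussSum (φ * X)⁻¹ θ))
      = gaussSum φ θ ^ 3 * jacobiSum (φ * X^2) (X^2)⁻¹ := by
  have hg := hh_gne (F := F) θ hθ
  have hφi : φ⁻¹ = φ := by rw [inv_eq_iff_mul_eq_one, ← sq, hφ2]
  have hχi : φ * χ₄ = χ₄⁻¹ := by
    rw [eq_inv_iff_mul_eq_one, mul_assoc, ← sq, hχ, ← sq, hφ2]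
  have a1 := hh_HD θ hs hφ1 h2 hc hq hg (χ₄ * X)
  have a2 := hh_HD θ hs hφ1 h2 hc hq hg X⁻¹
  rw [← mul_assoc φ χ₄ X, hχi, mul_pow, hχ] at a1
  have e1 : (φ * X)⁻¹ = φ * X⁻¹ := by rw [mul_inv, hφi]
  have a3 := jacobiSum_mul_nontrivial (χ := φ * X^2) (φ := (X^2)⁻¹) (by simpa using hφ1) θ
  rw [mul_inv_cancel_right] at a3
  have hX : X 4 * X⁻¹ 4 = 1 := by
    rw [← MulChar.mul_apply, mul_inv_cancel, MulChar.one_apply]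
    rw [isUnit_iff_ne_zero]
    have : (4:F) = 2^2 := by norm_num
    rw [this]; exact pow_ne_zero _ h2
  rw [e1]
  rw [MulChar.mul_apply] at a1
  rw [inv_pow] at a2
  calc _ = (X 4 * X⁻¹ 4) * χ₄ 4 * (gaussSum (χ₄ * X) θ * gaussSum (χ₄⁻¹ * X) θ * (gaussSum X⁻¹ θ * gaussSum (φ * X⁻¹) θ)) := by
        rw [hX]; ring
    _ = (χ₄ 4 * X 4 * (gaussSum (χ₄ * X) θ * gaussSum (χ₄⁻¹ * X) θ)) * (X⁻¹ 4 * (gaussSum X⁻¹ θ * gaussSum (φ * X⁻¹) θ)) := by ring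
    _ = (gaussSum φ θ * gaussSum (φ * X ^ 2) θ) * (gaussSum φ θ * gaussSum (X^2)⁻¹ θ) := by rw [a1, a2]
    _ = gaussSum φ θ ^ 2 * (gaussSum (φ * X ^ 2) θ * gaussSum (X^2)⁻¹ θ) := by ring
    _ = _ := by rw [← a3]; ring

theorem hh_jj {φ : MulChar F ℂ} (θ : AddChar F ℂ) (hθ : θ ≠ 1) (hφ1 : φ ≠ 1)
    (hneg : φ (-1) = 1) (hφ2 : φ ^ 2 = 1) (A : MulChar F ℂ) (hA : A^2 ≠ 1) (hA' : A^2 * φ ≠ 1) :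
    jacobiSum (φ * A^2) (A^2)⁻¹ * jacobiSum (φ * A⁻¹^2) (A⁻¹^2)⁻¹ = (Fintype.card F : ℂ) := by
  have hg := hh_gne (F := F) θ hθ
  have hφi : φ⁻¹ = φ := by rw [inv_eq_iff_mul_eq_one, ← sq, hφ2]
  have a1 := jacobiSum_mul_nontrivial (χ := φ * A^2) (φ := (A^2)⁻¹) (by simpa using hφ1) θ
  have a2 := jacobiSum_mul_nontrivial (χ := φ * A⁻¹^2) (φ := (A⁻¹^2)⁻¹) (by simpa using hφ1) θ
  rw [mul_inv_cancel_right] at a1 a2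
  have b1 := hh_ginv θ hθ hφ1
  rw [hφi, hneg] at b1
  have b2 := hh_ginv θ hθ hA
  have b3 := hh_ginv θ hθ hA'
  have e1 : A⁻¹^2 = (A^2)⁻¹ := inv_pow _ _
  have e2 : (A^2 * φ)⁻¹ = φ * (A^2)⁻¹ := by rw [mul_inv, hφi, mul_comm]
  have e3 : (A^2) (-1) = 1 := by
    rw [MulChar.pow_apply' _ two_ne_zero, sq]; exact hh_sign A
  rw [e1, inv_inv] at a2 ⊢
  rw [e2, mul_comm (A^2) φ, MulChar.mul_apply, e3, hneg] at b3
  rw [e3] at b2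
  apply mul_left_cancel₀ (mul_ne_zero (hg φ) (hg φ))
  calc _ = (gaussSum φ θ * jacobiSum (φ * A^2) (A^2)⁻¹) * (gaussSum φ θ * jacobiSum (φ * (A^2)⁻¹) (A^2)) := by ring
    _ = (gaussSum (A^2) θ * gaussSum (A^2)⁻¹ θ) * (gaussSum (φ * A^2) θ * gaussSum (φ * (A^2)⁻¹) θ) := by
      rw [a1, a2]; ring
    _ = _ := by rw [b2, b3, b1]; ring

theorem hh_Rterm {φ : MulChar F ℂ} (θ : AddChar F ℂ) (hθ : θ ≠ 1) (hφ1 : φ ≠ 1)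
    (hneg : φ (-1) = 1) (hφ2 : φ ^ 2 = 1) (A R : MulChar F ℂ) (hR : R^2 = φ) :
    gaussSum (R⁻¹ * φ * A ^ 2) θ * gaussSum (R⁻¹ * φ * A⁻¹ ^ 2) θ / gaussSum R⁻¹ θ ^ 2
      = jacobiSum (R * A^2) (R * (A^2)⁻¹) * jacobiSum R R / (Fintype.card F : ℂ) := by
  have hg := hh_gne (F := F) θ hθ
  have hφi : φ⁻¹ = φ := by rw [inv_eq_iff_mul_eq_one, ← sq, hφ2]
  have hq0 : (Fintype.card F : ℂ) ≠ 0 := by exact_mod_cast Fintype.card_ne_zero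
  have e1 : R⁻¹ * φ = R := by rw [← hR, sq, inv_mul_cancel_left]
  have e2 : (R * A^2) * (R * (A^2)⁻¹) = φ := by
    rw [mul_mul_mul_comm, mul_inv_cancel, mul_one, ← sq, hR]
  have a1 := jacobiSum_mul_nontrivial (χ := R * A^2) (φ := R * (A^2)⁻¹) (by rwa [e2]) θ
  have a2 := jacobiSum_mul_nontrivial (χ := R) (φ := R) (by rwa [← sq, hR]) θ
  rw [e2] at a1
  rw [← sq, hR] at a2
  have hR1 : R ≠ 1 := by rintro rfl; exact hφ1 (by rw [← hR, one_pow])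
  have b1 := hh_ginv θ hθ hφ1
  rw [hφi, hneg, one_mul] at b1
  have b2 := hh_ginv θ hθ hR1
  have b3 := hh_sign R
  rw [e1, inv_pow, ← a1, div_eq_div_iff (pow_ne_zero _ (hg _)) hq0]
  apply mul_left_cancel₀ (hg φ)
  calc _ = (gaussSum φ θ * gaussSum φ θ) * Fintype.card F * jacobiSum (R * A^2) (R * (A^2)⁻¹) := by ring
    _ = (R (-1) * R (-1)) * Fintype.card F * Fintype.card F * jacobiSum (R * A^2) (R * (A^2)⁻¹) := by
      rw [b1, b3]; ring
    _ = (R (-1) * Fintype.card F) * (R (-1) * Fintype.card F) * jacobiSum (R * A^2) (R * (A^2)⁻¹) := by ring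
    _ = (gaussSum R θ * gaussSum R θ) * gaussSum R⁻¹ θ ^ 2 * jacobiSum (R * A^2) (R * (A^2)⁻¹) := by
      rw [← b2]; ring
    _ = _ := by rw [← a2]; ring

theorem hh_Sterm {φ χ₄ : MulChar F ℂ} (θ : AddChar F ℂ) (hθ : θ ≠ 1) (hφ1 : φ ≠ 1)
    (hneg : φ (-1) = 1) (hφ2 : φ ^ 2 = 1) (hχ : χ₄ ^ 2 = φ) (A S : MulChar F ℂ) (hA : A ^ 8 ≠ 1)
    (hS : S^2 = χ₄) :
    gaussSum (S * A) θ * gaussSum (χ₄ * S * A) θ / (gaussSum (φ * S * A) θ * gaussSum (χ₄⁻¹ * S * A) θ)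
      = jacobiSum (S * A) (S^3 * A⁻¹) * jacobiSum (S^3 * A) (S * A⁻¹) / (Fintype.card F : ℂ) := by
  have hg := hh_gne (F := F) θ hθ
  have hφi : φ⁻¹ = φ := by rw [inv_eq_iff_mul_eq_one, ← sq, hφ2]
  have hq0 : (Fintype.card F : ℂ) ≠ 0 := by exact_mod_cast Fintype.card_ne_zero
  have hS4 : S^4 = φ := by rw [← hχ, ← hS, ← pow_mul]
  have hS8 : S^8 = 1 := by rw [← hφ2, ← hS4, ← pow_mul]
  have e1 : χ₄ * S = S^3 := by rw [← hS, ← pow_succ]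
  have e2 : φ * S = S^5 := by rw [← hS4, ← pow_succ]
  have e3 : χ₄⁻¹ * S = S⁻¹ := by rw [← hS, sq, mul_inv, inv_mul_cancel_right]
  have f1 : (S^5 * A)⁻¹ = S^3 * A⁻¹ := by
    rw [mul_inv]; congr 1; rw [inv_eq_iff_mul_eq_one, ← pow_add, hS8]
  have f2 : (S⁻¹ * A)⁻¹ = S * A⁻¹ := by rw [mul_inv, inv_inv]
  have n1 : S^5 * A ≠ 1 := by
    intro h
    apply hA
    have : (S^5 * A)^8 = 1 := by rw [h, one_pow]
    rwa [mul_pow, ← pow_mul, mul_comm 5 8, pow_mul, hS8, one_pow, one_mul] at this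
  have n2 : S⁻¹ * A ≠ 1 := by
    intro h
    apply hA
    have : (S⁻¹ * A)^8 = 1 := by rw [h, one_pow]
    rwa [mul_pow, inv_pow, hS8, inv_one, one_mul] at this
  have b0 := hh_ginv θ hθ hφ1
  rw [hφi, hneg, one_mul] at b0
  have b1 := hh_ginv θ hθ n1
  have b2 := hh_ginv θ hθ n2
  rw [f1] at b1
  rw [f2] at b2
  have hsg : (S^5 * A) (-1) * (S⁻¹ * A) (-1) = 1 := by
    have : (S^5 * A) * (S⁻¹ * A) = (S^2 * A)^2 := by
      rw [mul_mul_mul_comm, mul_pow, ← sq, ← pow_mul]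
      congr 1
      rw [mul_inv_eq_iff_eq_mul, ← pow_succ]
    rw [← MulChar.mul_apply, this, sq, MulChar.mul_apply]; exact hh_sign _
  have g1 : (S * A) * (S^3 * A⁻¹) = φ := by
    rw [mul_mul_mul_comm, mul_inv_cancel, mul_one, ← pow_succ', hS4]
  have g2 : (S^3 * A) * (S * A⁻¹) = φ := by
    rw [mul_mul_mul_comm, mul_inv_cancel, mul_one, ← pow_succ, hS4]
  have a1 := jacobiSum_mul_nontrivial (χ := S * A) (φ := S^3 * A⁻¹) (by rwa [g1]) θ
  have a2 := jacobiSum_mul_nontrivial (χ := S^3 * A) (φ := S * A⁻¹) (by rwa [g2]) θ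
  rw [g1] at a1
  rw [g2] at a2
  rw [e1, e2, e3, div_eq_div_iff (mul_ne_zero (hg _) (hg _)) hq0]
  apply mul_left_cancel₀ (mul_ne_zero (hg φ) (hg φ))
  symm
  calc _ = (gaussSum φ θ * jacobiSum (S * A) (S^3 * A⁻¹)) * (gaussSum φ θ * jacobiSum (S^3 * A) (S * A⁻¹)) *
          (gaussSum (S^5 * A) θ * gaussSum (S⁻¹ * A) θ) := by ring
    _ = (gaussSum (S * A) θ * gaussSum (S^3 * A) θ) * ((gaussSum (S^5 * A) θ * gaussSum (S^3 * A⁻¹) θ) *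
          (gaussSum (S⁻¹ * A) θ * gaussSum (S * A⁻¹) θ)) := by rw [a1, a2]; ring
    _ = (gaussSum (S * A) θ * gaussSum (S^3 * A) θ) * (((S^5 * A) (-1) * (S⁻¹ * A) (-1)) * (Fintype.card F * Fintype.card F)) := by
      rw [b1, b2]; ring
    _ = _ := by rw [hsg, b0]; ring

end final

open scoped Classical in
theorem stmt10 {F : Type} [Field F] [Fintype F] (hq : Fintype.card F % 4 = 1)
    (θ : AddChar F ℂ) (hθ : θ ≠ 1)
    (φ : MulChar F ℂ) (hφ : orderOf φ = 2)
    (χ₄ : MulChar F ℂ) (hχ₄ : orderOf χ₄ = 4)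
    (A : MulChar F ℂ) (hA : A ^ 8 ≠ 1) :
    letI : Fintype (MulChar F ℂ) := Fintype.ofFinite _
    ffHyp θ ![χ₄, χ₄⁻¹, χ₄ * A, χ₄⁻¹ * A, χ₄ * A⁻¹, χ₄⁻¹ * A⁻¹]
        ![1, φ, A⁻¹, φ * A⁻¹, A, φ * A] 1
      = 1
        + ∑ R ∈ Finset.univ.filter (fun R : MulChar F ℂ => R ^ 2 = φ),
            gaussSum (R⁻¹ * φ * A ^ 2) θ * gaussSum (R⁻¹ * φ * A⁻¹ ^ 2) θ /
              gaussSum R⁻¹ θ ^ 2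
        + (if Fintype.card F % 8 = 1 then
            ∑ S ∈ Finset.univ.filter (fun S : MulChar F ℂ => S ^ 2 = χ₄),
              gaussSum (S * A) θ * gaussSum (χ₄ * S * A) θ /
                (gaussSum (φ * S * A) θ * gaussSum (χ₄⁻¹ * S * A) θ)
          else 0) := by
  letI : Fintype (MulChar F ℂ) := Fintype.ofFinite _
  show ffHyp θ _ _ 1 = _
  have hrc : ringChar F ≠ 2 := by
    intro h
    have := FiniteField.even_card_of_char_two h
    omega
  have h2 : (2:F) ≠ 0 := Ring.two_ne_zero hrc
  obtain ⟨i, hi⟩ : IsSquare (-1 : F) := FiniteField.isSquare_neg_one_iff.2 (by omega)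
  have hi2 : i^2 = -1 := by rw [hi, sq]
  have hi0 : i ≠ 0 := by rintro rfl; simp at hi
  have hφ2 : φ ^ 2 = 1 := by rw [← hφ]; exact pow_orderOf_eq_one φ
  have hφ1 : φ ≠ 1 := by rintro rfl; simp at hφ
  have hχ41 : χ₄ ^ 4 = 1 := by rw [← hχ₄]; exact pow_orderOf_eq_one χ₄
  have hχ21 : χ₄ ^ 2 ≠ 1 := by
    intro h
    have := orderOf_dvd_of_pow_eq_one h
    rw [hχ₄] at this
    revert this; decide
  have hquad := hh_quad hrc hφ2 hφ1
  have huniq : ∀ ψ : MulChar F ℂ, ψ^2 = 1 → ψ ≠ 1 → ψ = φ := fun ψ h h' => by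
    rw [hquad, hh_quad hrc h h']
  have hχ : χ₄ ^ 2 = φ := huniq _ (by rw [← pow_mul, hχ41]) hχ21
  have hc := hh_count hrc hquad
  have hs : ∀ x : F, x ≠ 0 → φ (x^2) = 1 := by
    intro x hx
    rw [map_pow, ← MulChar.pow_apply' _ two_ne_zero, hφ2, MulChar.one_apply (isUnit_iff_ne_zero.2 hx)]
  have hneg : φ (-1) = 1 := by rw [← hi2]; exact hs i hi0
  have hA2 : A^2 ≠ 1 := by
    intro h; apply hA
    rw [show 8 = 2 * 4 by norm_num, pow_mul, h, one_pow]
  have hA2φ : A^2 * φ ≠ 1 := by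
    intro h; apply hA
    have : (A^2 * φ)^4 = 1 := by rw [h, one_pow]
    rwa [mul_pow, ← pow_mul, show φ^4 = (φ^2)^2 by rw [← pow_mul], hφ2, one_pow, mul_one] at this
  have hg := hh_gne (F := F) θ hθ
  have hq0 : (Fintype.card F : ℂ) ≠ 0 := by exact_mod_cast Fintype.card_ne_zero
  have hq1 := hh_card_ne (F := F)
  have hpair := hh_pair (χ₄ := χ₄) θ hθ hs hφ1 h2 hc huniq hφ2 hχ
  have hjj := hh_jj θ hθ hφ1 hneg hφ2 A hA2 hA2φ
  have hj1 : jacobiSum (φ * 1^2) ((1 : MulChar F ℂ)^2)⁻¹ = -1 := by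
    rw [one_pow, inv_one, mul_one, jacobiSum_comm, jacobiSum_one_nontrivial hφ1]
  have h44 : χ₄ 4 ≠ 0 := by
    intro h
    have := hpair 1
    rw [h, hj1, zero_mul] at this
    have h3 := pow_ne_zero 3 (hg φ)
    apply h3
    linear_combination this
  have hterm : ∀ χ : MulChar F ℂ,
      (∏ k : Fin 6, (gaussSum ((![χ₄, χ₄⁻¹, χ₄ * A, χ₄⁻¹ * A, χ₄ * A⁻¹, χ₄⁻¹ * A⁻¹] : Fin 6 → MulChar F ℂ) k * χ) θ /
          gaussSum ((![χ₄, χ₄⁻¹, χ₄ * A, χ₄⁻¹ * A, χ₄ * A⁻¹, χ₄⁻¹ * A⁻¹] : Fin 6 → MulChar F ℂ) k) θ) *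
        (gaussSum (((![1, φ, A⁻¹, φ * A⁻¹, A, φ * A] : Fin 6 → MulChar F ℂ) k * χ)⁻¹) θ /
          gaussSum (((![1, φ, A⁻¹, φ * A⁻¹, A, φ * A] : Fin 6 → MulChar F ℂ) k)⁻¹) θ)) *
      χ (-1) ^ (Fintype.card (Fin 6)) * χ 1 =
      -(jacobiSum (φ * χ^2) (χ^2)⁻¹ * jacobiSum (φ * (A^2 * χ^2)) (A^2 * χ^2)⁻¹
        * jacobiSum (φ * ((A^2)⁻¹ * χ^2)) ((A^2)⁻¹ * χ^2)⁻¹) / (Fintype.card F : ℂ) := by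
    intro χ
    have s1 : χ (-1) ^ (Fintype.card (Fin 6)) = 1 := by
      rw [Fintype.card_fin, show 6 = 2 * 3 by norm_num, pow_mul, sq, hh_sign, one_pow]
    have p1 := hpair χ
    have p2 := hpair (A * χ)
    have p3 := hpair (A⁻¹ * χ)
    have d1 := hpair 1
    have d2 := hpair A
    have d3 := hpair A⁻¹
    rw [hj1] at d1
    rw [mul_pow] at p2 p3
    rw [inv_pow] at p3
    simp only [mul_one, one_mul, ← mul_assoc] at p1 p2 p3 d1 d2 d3 hjj ⊢
    rw [s1, map_one, Fin.prod_univ_six]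
    simp only [Matrix.cons_val, one_mul, mul_one]
    set c := gaussSum φ θ ^ 3 with hcdef
    have hc0 : c ≠ 0 := pow_ne_zero _ (hg φ)
    generalize hja : jacobiSum (φ * A^2) (A^2)⁻¹ = ja at d2 hjj
    generalize hjb : jacobiSum (φ * A⁻¹^2) (A⁻¹^2)⁻¹ = jb at d3 hjj
    have D : χ₄ 4 ^ 3 * ((gaussSum χ₄ θ * gaussSum χ₄⁻¹ θ * gaussSum 1⁻¹ θ * gaussSum φ⁻¹ θ) *
      (gaussSum (χ₄ * A) θ * gaussSum (χ₄⁻¹ * A) θ * gaussSum A⁻¹ θ * gaussSum (φ * A)⁻¹ θ) *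
      (gaussSum (χ₄ * A⁻¹) θ * gaussSum (χ₄⁻¹ * A⁻¹) θ * gaussSum A⁻¹⁻¹ θ * gaussSum (φ * A⁻¹)⁻¹ θ)) = 
      - c^3 * Fintype.card F := by
      rw [← hjj]
      linear_combination (χ₄ 4 ^ 2 * ((gaussSum (χ₄ * A) θ * gaussSum (χ₄⁻¹ * A) θ * gaussSum A⁻¹ θ * gaussSum (φ * A)⁻¹ θ) *
      (gaussSum (χ₄ * A⁻¹) θ * gaussSum (χ₄⁻¹ * A⁻¹) θ * gaussSum A⁻¹⁻¹ θ * gaussSum (φ * A⁻¹)⁻¹ θ))) * d1 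
       - c * (χ₄ 4 * (gaussSum (χ₄ * A⁻¹) θ * gaussSum (χ₄⁻¹ * A⁻¹) θ * gaussSum A⁻¹⁻¹ θ * gaussSum (φ * A⁻¹)⁻¹ θ)) * d2 - c * (c * ja) * d3
    have N : χ₄ 4 ^ 3 * ((gaussSum (χ₄ * χ) θ * gaussSum (χ₄⁻¹ * χ) θ * gaussSum χ⁻¹ θ * gaussSum (φ * χ)⁻¹ θ) *
      (gaussSum (χ₄ * A * χ) θ * gaussSum (χ₄⁻¹ * A * χ) θ * gaussSum (A * χ)⁻¹ θ * gaussSum (φ * A * χ)⁻¹ θ) *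
      (gaussSum (χ₄ * A⁻¹ * χ) θ * gaussSum (χ₄⁻¹ * A⁻¹ * χ) θ * gaussSum (A⁻¹ * χ)⁻¹ θ * gaussSum (φ * A⁻¹ * χ)⁻¹ θ)) = 
      c^3 * (jacobiSum (φ * χ^2) (χ^2)⁻¹ * jacobiSum (φ * A^2 * χ^2) (A^2 * χ^2)⁻¹
        * jacobiSum (φ * (A^2)⁻¹ * χ^2) ((A^2)⁻¹ * χ^2)⁻¹) := by
      have := congrArg₂ (· * ·) (congrArg₂ (· * ·) p1 p2) p3
      linear_combination this
    have hD0 : (gaussSum χ₄ θ * gaussSum χ₄⁻¹ θ * gaussSum 1⁻¹ θ * gaussSum φ⁻¹ θ) *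
      (gaussSum (χ₄ * A) θ * gaussSum (χ₄⁻¹ * A) θ * gaussSum A⁻¹ θ * gaussSum (φ * A)⁻¹ θ) *
      (gaussSum (χ₄ * A⁻¹) θ * gaussSum (χ₄⁻¹ * A⁻¹) θ * gaussSum A⁻¹⁻¹ θ * gaussSum (φ * A⁻¹)⁻¹ θ) ≠ 0 := by
      simp only [ne_eq, mul_eq_zero, hg, or_self, not_false_eq_true]
    simp only [div_mul_div_comm]
    rw [div_eq_div_iff (by simp only [ne_eq, mul_eq_zero, hg, or_self, not_false_eq_true]) hq0]
    apply mul_left_cancel₀ (mul_ne_zero (pow_ne_zero 3 h44) (pow_ne_zero 3 hc0))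
    linear_combination (c^3 * Fintype.card F) * N - c^3 * (jacobiSum (φ * χ^2) (χ^2)⁻¹ * jacobiSum (φ * A^2 * χ^2) (A^2 * χ^2)⁻¹
        * jacobiSum (φ * (A^2)⁻¹ * χ^2) ((A^2)⁻¹ * χ^2)⁻¹) * (-D)
  have hL : ffHyp θ ![χ₄, χ₄⁻¹, χ₄ * A, χ₄⁻¹ * A, χ₄ * A⁻¹, χ₄⁻¹ * A⁻¹]
        ![1, φ, A⁻¹, φ * A⁻¹, A, φ * A] 1 = (-1 : ℂ) / ((Fintype.card F : ℂ) - 1) *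
      ∑ χ : MulChar F ℂ, -(jacobiSum (φ * χ^2) (χ^2)⁻¹ * jacobiSum (φ * (A^2 * χ^2)) (A^2 * χ^2)⁻¹
        * jacobiSum (φ * ((A^2)⁻¹ * χ^2)) ((A^2)⁻¹ * χ^2)⁻¹) / (Fintype.card F : ℂ) := by
    unfold ffHyp
    congr 1
    exact Finset.sum_congr rfl fun χ _ => hterm χ
  rw [hL, ← Finset.sum_div, Finset.sum_neg_distrib, hh_Xsum h2 hs hneg,
    hh_total h2 hs hφ1 hc i hi2 hχ A hA2φ]
  have hR : ∑ R ∈ Finset.univ.filter (fun R : MulChar F ℂ => R ^ 2 = φ),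
            gaussSum (R⁻¹ * φ * A ^ 2) θ * gaussSum (R⁻¹ * φ * A⁻¹ ^ 2) θ /
              gaussSum R⁻¹ θ ^ 2 = (∑ R ∈ Finset.univ.filter (fun R : MulChar F ℂ => R ^ 2 = φ),
          jacobiSum (R * A^2) (R * (A^2)⁻¹) * jacobiSum R R) / Fintype.card F := by
    rw [Finset.sum_div]
    refine Finset.sum_congr rfl fun R hR => ?_
    exact hh_Rterm θ hθ hφ1 hneg hφ2 A R (Finset.mem_filter.1 hR).2
  have hS : ∑ S ∈ Finset.univ.filter (fun S : MulChar F ℂ => S ^ 2 = χ₄),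
              gaussSum (S * A) θ * gaussSum (χ₄ * S * A) θ /
                (gaussSum (φ * S * A) θ * gaussSum (χ₄⁻¹ * S * A) θ) =
       (∑ S ∈ Finset.univ.filter (fun S : MulChar F ℂ => S ^ 2 = χ₄),
          jacobiSum (S * A) (S^3 * A⁻¹) * jacobiSum (S^3 * A) (S * A⁻¹)) / Fintype.card F := by
    rw [Finset.sum_div]
    refine Finset.sum_congr rfl fun S hS => ?_
    exact hh_Sterm θ hθ hφ1 hneg hφ2 hχ A S hA (Finset.mem_filter.1 hS).2
  have hif : (if Fintype.card F % 8 = 1 then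
            ∑ S ∈ Finset.univ.filter (fun S : MulChar F ℂ => S ^ 2 = χ₄),
              gaussSum (S * A) θ * gaussSum (χ₄ * S * A) θ /
                (gaussSum (φ * S * A) θ * gaussSum (χ₄⁻¹ * S * A) θ)
          else 0) = ∑ S ∈ Finset.univ.filter (fun S : MulChar F ℂ => S ^ 2 = χ₄),
              gaussSum (S * A) θ * gaussSum (χ₄ * S * A) θ /
                (gaussSum (φ * S * A) θ * gaussSum (χ₄⁻¹ * S * A) θ) := by
    split_ifs with h8
    · rfl
    · symm
      rw [Finset.filter_eq_empty_iff.2, Finset.sum_empty]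
      intro S _ hS
      apply h8
      have h4 : S^(2^2) = φ := by rw [← hχ, ← hS, ← pow_mul]; norm_num
      have ho : orderOf S = 2^(2+1) := by
        apply orderOf_eq_prime_pow
        · rw [h4]; exact hφ1
        · rw [pow_succ 2 2, pow_mul, h4, hφ2]
      have hd := MulChar.orderOf_dvd_card_sub_one F S
      rw [ho] at hd
      norm_num at hd
      omega
  rw [hif, hS, hR]
  field_simp
end
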